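/- arXiv:math/0310418 — 9 statements merged into one kernel-verified Lean document; each statement's English description precedes it below -/
import Mathlib

section
/- Let Γ₀ be a linearly ordered commutative group with zero, A a commutative ring, and |·| : A → Γ₀ a power-multiplicative seminorm. For a monic polynomial p = T^m + a₁T^{m-1} + ⋯ + a_m ∈ A[T] and γ ∈ Γ₀, say that p is γ-bounded if |a_i| ≤ γ^i for all i = 1,…,m (this expresses that the spectral value σ(p) := max_i |a_i|^{1/i} satisfies σ(p) ≤ γ). Then: (1) if p and q are monic polynomials that are both γ-bounded, then the product p·q is γ-bounded (i.e. σ(pq) ≤ max(σ(p),σ(q))); (2) if moreover |·| is a valuation (i.e. |x·y| = |x|·|y| for all x,y ∈ A), then conversely, if p·q is γ-bounded then both p and q are γ-bounded (i.e. σ(pq) = max(σ(p),σ(q))). -/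
/-- A monic polynomial `p = T^m + a₁T^{m-1} + ⋯ + a_m` is `γ`-bounded for a seminorm `ν`
if `ν aᵢ ≤ γ^i` for `i = 1, …, m`; in terms of coefficients, `ν (p.coeff k) ≤ γ^(m - k)`
for every `k` (the cases `k ≥ m` being trivial).  This expresses that the spectral value
`σ(p) = max_i ν(aᵢ)^{1/i}` satisfies `σ(p) ≤ γ`. -/
def SpectralValueLE {A Γ₀ : Type*} [CommRing A] [LinearOrderedCommGroupWithZero Γ₀]
    (ν : A → Γ₀) (γ : Γ₀) (p : Polynomial A) : Prop :=
  ∀ k : ℕ, ν (p.coeff k) ≤ γ ^ (p.natDegree - k)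

theorem aux_sum_le {A Γ₀ : Type*} [CommRing A] [LinearOrderedCommGroupWithZero Γ₀]
    (ν : A → Γ₀) (hν0 : ν 0 = 0) (hadd : ∀ x y : A, ν (x + y) ≤ max (ν x) (ν y))
    {ι : Type*} (s : Finset ι) (f : ι → A) (c : Γ₀) (h : ∀ i ∈ s, ν (f i) ≤ c) :
    ν (∑ i ∈ s, f i) ≤ c := by
  classical
  induction s using Finset.induction_on with
  | empty => simp [hν0]
  | insert a s ha ih =>
    rw [Finset.sum_insert ha]
    refine (hadd _ _).trans (max_le (h a (by simp)) (ih fun i hi => h i (by simp [hi])))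

theorem aux_coeff {A Γ₀ : Type*} [CommRing A] [LinearOrderedCommGroupWithZero Γ₀]
    (v : Valuation A Γ₀) (p q : Polynomial A) (i j : ℕ)
    (h0 : v (p.coeff i) * v (q.coeff j) ≠ 0)
    (h1 : ∀ i' j', i' + j' = i + j → i' < i →
      v (p.coeff i') * v (q.coeff j') < v (p.coeff i) * v (q.coeff j))
    (h2 : ∀ i' j', i' + j' = i + j → j' < j →
      v (p.coeff i') * v (q.coeff j') < v (p.coeff i) * v (q.coeff j)) :
    v ((p * q).coeff (i + j)) = v (p.coeff i) * v (q.coeff j) := by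
  classical
  rw [Polynomial.coeff_mul,
    ← Finset.add_sum_erase (Finset.HasAntidiagonal.antidiagonal (i + j)) _
      (Finset.HasAntidiagonal.mem_antidiagonal.mpr (rfl : (i, j).1 + (i, j).2 = i + j))]
  rw [Valuation.map_add_eq_of_lt_left, map_mul]
  rw [map_mul]
  apply Valuation.map_sum_lt _ h0
  rintro ⟨a, b⟩ hab
  simp only [Finset.mem_erase, Finset.HasAntidiagonal.mem_antidiagonal, ne_eq, Prod.mk.injEq] at hab
  rw [map_mul]
  rcases lt_or_ge a i with h | h
  · exact h1 a b hab.2 h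
  · exact h2 a b hab.2 (by omega)

theorem aux_max {Γ₀ : Type*} [LinearOrderedCommGroupWithZero Γ₀]
    (f : ℕ → Γ₀) (N : ℕ) (hf : ∀ i, N < i → f i = 0) :
    ∃ i, (∀ k, f k ≤ f i) ∧ ∀ k, k < i → f k < f i := by
  classical
  have hex : ∃ i, ∀ k, f k ≤ f i := by
    obtain ⟨i, -, hi⟩ := Finset.exists_max_image (Finset.range (N + 1)) f ⟨0, by simp⟩
    refine ⟨i, fun k => ?_⟩
    rcases lt_or_ge N k with h | h
    · rw [hf k h]; exact zero_le
    · exact hi k (by simp; omega)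
  refine ⟨Nat.find hex, Nat.find_spec hex, fun k hk => ?_⟩
  have := Nat.find_min hex hk
  push Not at this
  obtain ⟨l, hl⟩ := this
  exact hl.trans_le (Nat.find_spec hex l)

theorem aux_zero {A Γ₀ : Type*} [CommRing A] [LinearOrderedCommGroupWithZero Γ₀]
    (v : Valuation A Γ₀) (p q : Polynomial A) (hp : p.Monic) (hq : q.Monic)
    (h : ∀ k, k < p.natDegree + q.natDegree → v ((p * q).coeff k) = 0) :
    ∀ k, k < p.natDegree → v (p.coeff k) = 0 := by
  classical
  have ep : ∃ i, v (p.coeff i) ≠ 0 := ⟨p.natDegree, by simp [hp.coeff_natDegree]⟩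
  have eq' : ∃ i, v (q.coeff i) ≠ 0 := ⟨q.natDegree, by simp [hq.coeff_natDegree]⟩
  have hi := Nat.find_spec ep
  have hj := Nat.find_spec eq'
  have mi : ∀ k, k < Nat.find ep → v (p.coeff k) = 0 := fun k hk => by
    simpa using Nat.find_min ep hk
  have mj : ∀ k, k < Nat.find eq' → v (q.coeff k) = 0 := fun k hk => by
    simpa using Nat.find_min eq' hk
  have lj : Nat.find eq' ≤ q.natDegree := Nat.find_min' eq' (by simp [hq.coeff_natDegree])
  have hne := mul_ne_zero hi hj
  have key := aux_coeff v p q _ _ hne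
    (fun i' j' _ hlt => by rw [mi i' hlt, zero_mul]; exact zero_lt_iff.mpr hne)
    (fun i' j' _ hlt => by rw [mj j' hlt, mul_zero]; exact zero_lt_iff.mpr hne)
  intro k hk
  apply mi
  by_contra hcon
  rw [h _ (by omega)] at key
  exact hne key.symm

theorem aux_pos {A Γ₀ : Type*} [CommRing A] [LinearOrderedCommGroupWithZero Γ₀]
    (v : Valuation A Γ₀) (γ : Γ₀) (hγ : γ ≠ 0)
    (p q : Polynomial A) (hp : p.Monic) (hq : q.Monic)
    (h : ∀ k, v ((p * q).coeff k) * γ ^ k ≤ γ ^ (p.natDegree + q.natDegree)) :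
    ∀ k, v (p.coeff k) * γ ^ k ≤ γ ^ p.natDegree := by
  obtain ⟨i, hi, hi'⟩ := aux_max (fun k => v (p.coeff k) * γ ^ k) p.natDegree
    (fun k hk => by simp [Polynomial.coeff_eq_zero_of_natDegree_lt hk])
  obtain ⟨j, hj, hj'⟩ := aux_max (fun k => v (q.coeff k) * γ ^ k) q.natDegree
    (fun k hk => by simp [Polynomial.coeff_eq_zero_of_natDegree_lt hk])
  have gi : γ ^ p.natDegree ≤ v (p.coeff i) * γ ^ i := by
    simpa [hp.coeff_natDegree] using hi p.natDegree
  have gj : γ ^ q.natDegree ≤ v (q.coeff j) * γ ^ j := by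
    simpa [hq.coeff_natDegree] using hj q.natDegree
  have pos : ∀ n : ℕ, 0 < γ ^ n := fun n => zero_lt_iff.mpr (pow_ne_zero _ hγ)
  have pi := (pos _).trans_le gi
  have pj := (pos _).trans_le gj
  have re : ∀ (a b : Γ₀) (m n : ℕ), a * γ ^ m * (b * γ ^ n) = a * b * γ ^ (m + n) := by
    intros; rw [pow_add, mul_mul_mul_comm]
  have key := aux_coeff v p q i j
    (mul_ne_zero (left_ne_zero_of_mul pi.ne') (left_ne_zero_of_mul pj.ne'))
    (fun i' j' hs hlt => by
      have h4 : v (p.coeff i') * γ ^ i' * (v (q.coeff j') * γ ^ j') <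
          v (p.coeff i) * γ ^ i * (v (q.coeff j) * γ ^ j) :=
        (mul_le_mul_right (hj j') _).trans_lt (mul_lt_mul_of_pos_right (hi' i' hlt) pj)
      rw [re, re, hs] at h4
      exact lt_of_mul_lt_mul_right h4 zero_le)
    (fun i' j' hs hlt => by
      have h4 : v (p.coeff i') * γ ^ i' * (v (q.coeff j') * γ ^ j') <
          v (p.coeff i) * γ ^ i * (v (q.coeff j) * γ ^ j) :=
        (mul_le_mul_left (hi i') _).trans_lt (mul_lt_mul_of_pos_left (hj' j' hlt) pi)
      rw [re, re, hs] at h4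
      exact lt_of_mul_lt_mul_right h4 zero_le)
  have hh := h (i + j)
  rw [key, ← re, pow_add] at hh
  intro k
  refine (hi k).trans ?_
  by_contra hcon
  push Not at hcon
  have h3 : γ ^ p.natDegree * γ ^ q.natDegree < v (p.coeff i) * γ ^ i * (v (q.coeff j) * γ ^ j) :=
    (mul_lt_mul_of_pos_right hcon (pos _)).trans_le (mul_le_mul_right gj _)
  exact absurd hh (not_le.mpr h3)

theorem aux_main {A Γ₀ : Type*} [CommRing A] [LinearOrderedCommGroupWithZero Γ₀]
    (v : Valuation A Γ₀) (γ : Γ₀) (p q : Polynomial A) (hp : p.Monic) (hq : q.Monic)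
    (hd : (p * q).natDegree = p.natDegree + q.natDegree)
    (h : SpectralValueLE v γ (p * q)) : SpectralValueLE v γ p := by
  have triv : ∀ r : Polynomial A, r.Monic → ∀ k, r.natDegree ≤ k → v (r.coeff k) ≤ 1 := by
    intro r hr k hk
    rcases hk.eq_or_lt with rfl | hk
    · simp [hr.coeff_natDegree]
    · simp [Polynomial.coeff_eq_zero_of_natDegree_lt hk]
  intro k
  rcases le_or_gt p.natDegree k with hk | hk
  · rw [Nat.sub_eq_zero_of_le hk, pow_zero]
    exact triv p hp k hk
  by_cases hγ : γ = 0
  · rw [aux_zero v p q hp hq ?_ k hk]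
    · exact zero_le
    · intro l hl
      have := h l
      rw [hγ, hd, zero_pow (by omega)] at this
      exact le_zero_iff.mp this
  · have pos : ∀ n : ℕ, 0 < γ ^ n := fun n => zero_lt_iff.mpr (pow_ne_zero _ hγ)
    have := aux_pos v γ hγ p q hp hq ?_ k
    · rw [← Nat.sub_add_cancel hk.le, pow_add] at this
      exact le_of_mul_le_mul_right this (pos _)
    · intro l
      rcases le_or_gt l (p.natDegree + q.natDegree) with hl | hl
      · have h5 := mul_le_mul_left (h l) (γ ^ l)
        rwa [hd, ← pow_add, Nat.sub_add_cancel hl] at h5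
      · rw [Polynomial.coeff_eq_zero_of_natDegree_lt (hd ▸ hl)]
        simp

/-- Lemma 1.3 (lem_specter): for a power-multiplicative seminorm, `σ(pq) ≤ max (σ p) (σ q)`
for monic `p`, `q`; if the seminorm is a valuation, this inequality is an equality. -/
theorem spectral_value_mul {A Γ₀ : Type*} [CommRing A] [LinearOrderedCommGroupWithZero Γ₀]
    (ν : A → Γ₀)
    (hν0 : ν 0 = 0) (hν1 : ν 1 = 1)
    (hνsub : ∀ x y : A, ν (x - y) ≤ max (ν x) (ν y))
    (hνmul : ∀ x y : A, ν (x * y) ≤ ν x * ν y)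
    (hνpow : ∀ (x : A) (n : ℕ), ν (x ^ n) = ν x ^ n)
    (γ : Γ₀) (p q : Polynomial A) (hp : p.Monic) (hq : q.Monic) :
    (SpectralValueLE ν γ p → SpectralValueLE ν γ q → SpectralValueLE ν γ (p * q)) ∧
    ((∀ x y : A, ν (x * y) = ν x * ν y) →
      SpectralValueLE ν γ (p * q) →
      SpectralValueLE ν γ p ∧ SpectralValueLE ν γ q) := by
  have : Nontrivial A := ⟨0, 1, fun h => by
    have h2 := congrArg ν h
    rw [hν0, hν1] at h2
    exact zero_ne_one h2⟩
  have hneg : ∀ y, ν (-y) ≤ ν y := fun y => by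
    have := hνsub 0 y
    rw [hν0, zero_sub] at this
    simpa using this
  have hadd : ∀ x y, ν (x + y) ≤ max (ν x) (ν y) := fun x y => by
    have := hνsub x (-y)
    rw [sub_neg_eq_add] at this
    exact this.trans (max_le_max le_rfl (hneg y))
  have hd : (p * q).natDegree = p.natDegree + q.natDegree := hp.natDegree_mul hq
  constructor
  · intro h1 h2 k
    rw [Polynomial.coeff_mul]
    apply aux_sum_le ν hν0 hadd
    rintro ⟨a, b⟩ hab
    rw [Finset.HasAntidiagonal.mem_antidiagonal] at hab
    simp only at hab ⊢
    rcases lt_or_ge p.natDegree a with ha | ha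
    · rw [Polynomial.coeff_eq_zero_of_natDegree_lt ha, zero_mul, hν0]
      exact zero_le
    rcases lt_or_ge q.natDegree b with hb | hb
    · rw [Polynomial.coeff_eq_zero_of_natDegree_lt hb, mul_zero, hν0]
      exact zero_le
    refine (hνmul _ _).trans ((mul_le_mul' (h1 a) (h2 b)).trans (le_of_eq ?_))
    rw [← pow_add, hd]
    congr 1
    omega
  · intro hm h
    let v : Valuation A Γ₀ :=
      { toFun := ν
        map_zero' := hν0
        map_one' := hν1
        map_mul' := hm
        map_add_le_max' := hadd }
    refine ⟨aux_main v γ p q hp hq hd h, aux_main v γ q p hq hp ?_ ?_⟩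
    · rw [mul_comm q p, hd, add_comm]
    · rw [mul_comm q p]
      exact h
end

section
/- Let Γ₀ be a divisible linearly ordered commutative group with zero (for every γ ∈ Γ₀ and every integer n ≥ 1 there exists a — necessarily unique — δ ∈ Γ₀ with δⁿ = γ; write γ^{1/n} for it). Let A be an integrally closed (normal) domain equipped with a power-multiplicative Γ₀-valued seminorm |·|, and let A → B be an injective ring homomorphism with B integral over A and B torsion-free as an A-module. For b ∈ B let μ_b = Tⁿ + a₁Tⁿ⁻¹ + ⋯ + aₙ be its minimal polynomial over the fraction field of A (its coefficients lie in A since A is integrally closed), and define the spectral seminorm |b|_sp := max_{1 ≤ i ≤ n} |a_i|^{1/i}. Then (B, |·|_sp) is a power-multiplicatively seminormed ring: |0|_sp = 0, |1|_sp = 1, |x − y|_sp ≤ max(|x|_sp, |y|_sp), |x·y|_sp ≤ |x|_sp·|y|_sp, and |xⁿ|_sp = |x|_sp ⁿ for all x, y ∈ B and n ∈ ℕ. -/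
noncomputable instance spectralOrderBot {Γ₀ : Type*} [LinearOrderedCommMonoidWithZero Γ₀] :
    OrderBot Γ₀ where
  bot := 0
  bot_le _ := zero_le'

/-- The spectral seminorm of `b ∈ B` relative to a seminorm `ν` on `A` and a choice
`root` of `n`-th roots in `Γ₀` : if the minimal polynomial of `b` over `A` is
`Tⁿ + a₁Tⁿ⁻¹ + ⋯ + aₙ` (so `aᵢ = coeff (n - i)`), then
`|b|_sp = max_{1 ≤ i ≤ n} ν(aᵢ)^{1/i} = max_{0 ≤ k < n} root (ν (coeff k)) (n - k)`. -/
noncomputable def spectralSemiNorm {A B Γ₀ : Type*} [CommRing A] [CommRing B] [Algebra A B]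
    [LinearOrderedCommGroupWithZero Γ₀]
    (ν : A → Γ₀) (root : Γ₀ → ℕ → Γ₀) (b : B) : Γ₀ :=
  (Finset.range (minpoly A b).natDegree).sup fun k =>
    root (ν ((minpoly A b).coeff k)) ((minpoly A b).natDegree - k)

open Polynomial

structure SpNu {A Γ₀ : Type*} [CommRing A] [LinearOrderedCommGroupWithZero Γ₀] (ν : A → Γ₀) :
    Prop where
  h0 : ν 0 = 0
  h1 : ν 1 = 1
  hsub : ∀ x y : A, ν (x - y) ≤ max (ν x) (ν y)
  hmul : ∀ x y : A, ν (x * y) ≤ ν x * ν y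
  hpow : ∀ (x : A) (n : ℕ), ν (x ^ n) = ν x ^ n

theorem sp_degree_lt {R : Type*} [CommRing R] (r : ℕ → R) (n : ℕ) :
    (∑ k ∈ Finset.range n, C (r k) * X ^ k : R[X]).degree < (n : WithBot ℕ) := by
  rw [← mem_degreeLT]
  refine Submodule.sum_mem _ fun k hk => ?_
  rw [mem_degreeLT]
  exact (degree_C_mul_X_pow_le _ _).trans_lt (by exact_mod_cast Finset.mem_range.1 hk)

section
variable {A Γ₀ : Type*} [CommRing A] [LinearOrderedCommGroupWithZero Γ₀] {ν : A → Γ₀}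

theorem SpNu.neg (h : SpNu ν) (x : A) : ν (-x) ≤ ν x := by
  have := h.hsub 0 x
  rw [h.h0, zero_sub] at this
  simpa using this

theorem SpNu.neg' (h : SpNu ν) (x : A) : ν (-x) = ν x :=
  le_antisymm (h.neg x) (by simpa using h.neg (-x))

theorem SpNu.add (h : SpNu ν) (x y : A) : ν (x + y) ≤ max (ν x) (ν y) := by
  have := h.hsub x (-y)
  rwa [sub_neg_eq_add, h.neg'] at this

theorem SpNu.sum (h : SpNu ν) {ι : Type*} (s : Finset ι) (f : ι → A) (c : Γ₀)
    (hf : ∀ i ∈ s, ν (f i) ≤ c) : ν (∑ i ∈ s, f i) ≤ c := by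
  classical
  induction s using Finset.induction_on with
  | empty => simp [h.h0]
  | insert i s hi ih =>
    rw [Finset.sum_insert hi]
    exact (h.add _ _).trans (max_le (hf i (by simp)) (ih fun j hj => hf j (by simp [hj])))

def SpI (ν : A → Γ₀) {S : Type*} [CommRing S] [Algebra A S] (c : Γ₀) (x : S) : Prop :=
  ∃ (n : ℕ) (a : ℕ → A), a n = 1 ∧ (∀ k ≤ n, ν (a k) ≤ c ^ (n - k)) ∧
    ∑ k ∈ Finset.range (n + 1), algebraMap A S (a k) * x ^ k = 0

/-- weighted subring -/
def spRing (h : SpNu ν) {σ : Type*} (w : (σ →₀ ℕ) → Γ₀) (w0 : w 0 = 1)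
    (wadd : ∀ m n, w (m + n) = w m * w n) : Subring (MvPolynomial σ A) where
  carrier := {f | ∀ m, ν (f.coeff m) ≤ w m}
  zero_mem' m := by simp [h.h0]
  one_mem' m := by
    classical
    rw [MvPolynomial.coeff_one]
    split_ifs with hm
    · rw [← hm, w0, h.h1]
    · rw [h.h0]; exact zero_le
  add_mem' {f g} hf hg m := by
    rw [MvPolynomial.coeff_add]
    exact (h.add _ _).trans (max_le (hf m) (hg m))
  neg_mem' {f} hf m := by
    rw [MvPolynomial.coeff_neg, h.neg']
    exact hf m
  mul_mem' {f g} hf hg m := by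
    classical
    rw [MvPolynomial.coeff_mul]
    refine h.sum _ _ _ fun p hp => (h.hmul _ _).trans ?_
    rw [← Finset.HasAntidiagonal.mem_antidiagonal.1 hp, wadd]
    exact mul_le_mul' (hf _) (hg _)

noncomputable def spHom (S : Type*) [CommRing S] [Algebra A S] (h : SpNu ν) {σ : Type*} (w : (σ →₀ ℕ) → Γ₀)
    (w0 : w 0 = 1) (wadd : ∀ m n, w (m + n) = w m * w n) :
    spRing h w w0 wadd →+* MvPolynomial σ S :=
  (MvPolynomial.map (algebraMap A S)).comp (spRing h w w0 wadd).subtype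

theorem sp_wnsmul {σ : Type*} (w : (σ →₀ ℕ) → Γ₀) (w0 : w 0 = 1)
    (wadd : ∀ m n, w (m + n) = w m * w n) (m : σ →₀ ℕ) (k : ℕ) : w (k • m) = w m ^ k := by
  induction k with
  | zero => simp [w0]
  | succ k ih => rw [succ_nsmul, wadd, ih, pow_succ]

theorem SpI.integral {S : Type*} [CommRing S] [Algebra A S] (h : SpNu ν) {σ : Type*}
    (w : (σ →₀ ℕ) → Γ₀) (w0 : w 0 = 1) (wadd : ∀ m n, w (m + n) = w m * w n)
    (m : σ →₀ ℕ) {x : S} (hx : SpI ν (w m) x) :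
    (spHom S h w w0 wadd).IsIntegralElem (MvPolynomial.monomial m x) := by
  classical
  obtain ⟨n, a, han, hle, hsum⟩ := hx
  let R := spRing h w w0 wadd
  have hmem : ∀ k ≤ n, MvPolynomial.monomial ((n - k) • m) (a k) ∈ R := by
    intro k hk m'
    rw [MvPolynomial.coeff_monomial]
    split_ifs with hm
    · rw [← hm, sp_wnsmul w w0 wadd]; exact hle k hk
    · rw [h.h0]; exact zero_le
  let r : ℕ → R := fun k => if hk : k ≤ n then ⟨_, hmem k hk⟩ else 0
  have hr : ∀ k ≤ n, (r k : MvPolynomial σ A) = MvPolynomial.monomial ((n - k) • m) (a k) := by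
    intro k hk
    simp [r, hk]
  have hrn : r n = 1 := by
    apply Subtype.ext
    rw [hr n le_rfl, han]; simp
  refine ⟨X ^ n + ∑ k ∈ Finset.range n, C (r k) * X ^ k, ?_, ?_⟩
  · apply monic_X_pow_add
    exact sp_degree_lt r n
  · have : (X ^ n + ∑ k ∈ Finset.range n, C (r k) * X ^ k : R[X]) =
        ∑ k ∈ Finset.range (n + 1), C (r k) * X ^ k := by
      rw [Finset.sum_range_succ, hrn, C_1, one_mul, add_comm]
    rw [this, eval₂_finsetSum]
    have h2 : ∀ k ∈ Finset.range (n + 1),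
        eval₂ (spHom S h w w0 wadd) (MvPolynomial.monomial m x) (C (r k) * X ^ k) =
        MvPolynomial.monomial (n • m) (algebraMap A S (a k) * x ^ k) := by
      intro k hk
      have hk' : k ≤ n := by simpa [Nat.lt_succ_iff] using hk
      rw [eval₂_mul, eval₂_C, eval₂_pow, eval₂_X]
      simp only [spHom, RingHom.comp_apply, Subring.coe_subtype, hr k hk', MvPolynomial.map_monomial,
        MvPolynomial.monomial_pow, MvPolynomial.monomial_mul]
      rw [← add_nsmul, Nat.sub_add_cancel hk']
    rw [Finset.sum_congr rfl h2, ← map_sum, hsum, map_zero]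

theorem SpI.of_integral {S : Type*} [CommRing S] [Algebra A S] (h : SpNu ν) {σ : Type*}
    (w : (σ →₀ ℕ) → Γ₀) (w0 : w 0 = 1) (wadd : ∀ m n, w (m + n) = w m * w n)
    (m : σ →₀ ℕ) {x : S}
    (hx : (spHom S h w w0 wadd).IsIntegralElem (MvPolynomial.monomial m x)) :
    SpI ν (w m) x := by
  classical
  obtain ⟨Q, hQ, hx⟩ := hx
  refine ⟨Q.natDegree, fun k => (Q.coeff k : MvPolynomial σ A).coeff ((Q.natDegree - k) • m),
    ?_, ?_, ?_⟩
  · simp [hQ]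
  · intro k hk
    rw [← sp_wnsmul w w0 wadd]
    exact (Q.coeff k).2 _
  · rw [eval₂_eq_sum_range] at hx
    have := congrArg (MvPolynomial.coeff (Q.natDegree • m)) hx
    rw [MvPolynomial.coeff_sum, MvPolynomial.coeff_zero] at this
    rw [← this]
    refine Finset.sum_congr rfl fun k hk => ?_
    have hk' : k ≤ Q.natDegree := by simpa [Nat.lt_succ_iff] using hk
    rw [MvPolynomial.monomial_pow]
    have e : Q.natDegree • m = (Q.natDegree - k) • m + k • m := by
      rw [← add_nsmul, Nat.sub_add_cancel hk']
    conv_rhs => rw [e, MvPolynomial.coeff_mul_monomial]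
    simp [spHom, MvPolynomial.coeff_map]

/-- weight with two variables -/
def spW (c d : Γ₀) (m : Bool →₀ ℕ) : Γ₀ := c ^ m true * d ^ m false

theorem spW0 (c d : Γ₀) : spW c d 0 = 1 := by simp [spW]
theorem spWadd (c d : Γ₀) (m n) : spW c d (m + n) = spW c d m * spW c d n := by
  simp [spW, pow_add, mul_mul_mul_comm]

theorem SpI.sub {S : Type*} [CommRing S] [Algebra A S] (h : SpNu ν) {c : Γ₀} {x y : S}
    (hx : SpI ν c x) (hy : SpI ν c y) : SpI ν c (x - y) := by
  have e : spW c c (Finsupp.single true 1) = c := by simp [spW]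
  rw [← e] at hx hy ⊢
  apply SpI.of_integral h _ (spW0 c c) (spWadd c c)
  rw [map_sub]
  exact (hx.integral h _ (spW0 c c) (spWadd c c)).sub _ (hy.integral h _ (spW0 c c) (spWadd c c))

theorem SpI.mul {S : Type*} [CommRing S] [Algebra A S] (h : SpNu ν) {c d : Γ₀} {x y : S}
    (hx : SpI ν c x) (hy : SpI ν d y) : SpI ν (c * d) (x * y) := by
  have e : spW c d (Finsupp.single true 1) = c := by simp [spW]
  have e' : spW c d (Finsupp.single false 1) = d := by simp [spW]
  rw [← e] at hx
  rw [← e'] at hy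
  have := SpI.of_integral (S := S) (x := x * y) h _ (spW0 c d) (spWadd c d)
    (Finsupp.single true 1 + Finsupp.single false 1) ?_
  · rwa [spWadd, e, e'] at this
  · rw [← MvPolynomial.monomial_mul]
    exact (hx.integral h _ (spW0 c d) (spWadd c d)).mul _ (hy.integral h _ (spW0 c d) (spWadd c d))

theorem SpI.of_aeval {S : Type*} [CommRing S] [Algebra A S] {c : Γ₀} {x : S} (P : A[X])
    (hP : P.Monic) (hPx : aeval x P = 0) (hle : ∀ k ≤ P.natDegree, ν (P.coeff k) ≤ c ^ (P.natDegree - k)) :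
    SpI ν c x :=
  ⟨P.natDegree, P.coeff, hP, hle, by rw [aeval_def, eval₂_eq_sum_range] at hPx; exact hPx⟩

theorem SpI.exists_poly {S : Type*} [CommRing S] [Algebra A S] {c : Γ₀} {x : S} (hx : SpI ν c x)
    (T : Type*) [CommRing T] [Algebra A T] :
    ∃ P : A[X], P.Monic ∧ aeval x P = 0 ∧ ∀ y : T,
      aeval y P = 0 → SpI ν c y := by
  obtain ⟨n, a, han, hle, hsum⟩ := hx
  have key : ∀ y : T,
      aeval y (∑ k ∈ Finset.range (n + 1), C (a k) * X ^ k) =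
      ∑ k ∈ Finset.range (n + 1), algebraMap A T (a k) * y ^ k := by
    intro y
    simp [map_sum]
  refine ⟨∑ k ∈ Finset.range (n + 1), C (a k) * X ^ k, ?_, ?_, ?_⟩
  · rw [Finset.sum_range_succ, han, C_1, one_mul, add_comm]
    apply monic_X_pow_add
    exact sp_degree_lt a n
  · simp only [map_sum, map_mul, aeval_C, map_pow, aeval_X]
    exact hsum
  · intro y hy
    rw [key] at hy
    exact ⟨n, a, han, hle, hy⟩

theorem SpI.zero {S : Type*} [CommRing S] [Algebra A S] (h : SpNu ν) (c : Γ₀) :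
    SpI ν c (0 : S) :=
  ⟨1, fun k => if k = 1 then 1 else 0, by simp, fun k hk => by
    interval_cases k <;> simp [h.h0, h.h1], by simp ⟩

theorem SpI.one {S : Type*} [CommRing S] [Algebra A S] (h : SpNu ν) : SpI ν (1 : Γ₀) (1 : S) :=
  ⟨1, fun k => if k = 1 then 1 else -1, by simp, fun k hk => by
    interval_cases k <;> simp [h.neg', h.h1], by simp [Finset.sum_range_succ]⟩

theorem SpI.pow {S : Type*} [CommRing S] [Algebra A S] (h : SpNu ν) {c : Γ₀} {x : S}
    (hx : SpI ν c x) (n : ℕ) : SpI ν (c ^ n) (x ^ n) := by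
  induction n with
  | zero => simpa using SpI.one h
  | succ n ih => rw [pow_succ, pow_succ]; exact ih.mul h hx

theorem SpI.of_inj {S : Type*} [CommRing S] [Algebra A S] (h : SpNu ν) {c : Γ₀} {a : A}
    (hi : Function.Injective (algebraMap A S)) (hx : SpI ν c (algebraMap A S a)) : ν a ≤ c := by
  obtain ⟨n, r, hrn, hle, hsum⟩ := hx
  have hs : ∑ k ∈ Finset.range (n + 1), r k * a ^ k = 0 := by
    apply hi
    rw [map_sum, map_zero, ← hsum]
    simp
  rw [Finset.sum_range_succ, hrn, one_mul] at hs
  by_contra! hlt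
  have h1 : a ^ n = - ∑ k ∈ Finset.range n, r k * a ^ k := by
    rw [eq_neg_iff_add_eq_zero, add_comm]; exact hs
  have hpos : 0 < ν a := zero_le.trans_lt hlt
  have hn : 0 < n := by
    rcases Nat.eq_zero_or_pos n with rfl | hn
    · simp at hs
      have : ν (1 : A) = ν 0 := by rw [hs]
      rw [h.h0, h.h1] at this
      exact absurd this one_ne_zero
    · exact hn
  have hb : ν (∑ k ∈ Finset.range n, r k * a ^ k) ≤ c * ν a ^ (n - 1) := by
    refine h.sum _ _ _ fun k hk => (h.hmul _ _).trans ?_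
    have hk := Finset.mem_range.1 hk
    rw [h.hpow]
    have e1 : c ^ (n - k) = c * c ^ (n - k - 1) := by
      rw [← pow_succ']; congr 1; omega
    have e2 : ν a ^ (n - 1) = ν a ^ (n - k - 1) * ν a ^ k := by
      rw [← pow_add]; congr 1; omega
    calc ν (r k) * ν a ^ k ≤ c ^ (n - k) * ν a ^ k := mul_le_mul_left (hle k hk.le) _
      _ = c * (c ^ (n - k - 1) * ν a ^ k) := by rw [e1, mul_assoc]
      _ ≤ c * ν a ^ (n - 1) := by
        rw [e2]
        exact mul_le_mul' le_rfl (mul_le_mul' (pow_le_pow_left' hlt.le _) le_rfl)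
  rw [← h.neg', ← h1, h.hpow] at hb
  have e3 : ν a ^ n = ν a * ν a ^ (n - 1) := by rw [← pow_succ']; congr 1; omega
  rw [e3] at hb
  have := le_of_mul_le_mul_right hb (pow_pos hpos _)
  exact absurd this (not_le.2 hlt)

theorem sp_coeff_prod {S : Type*} [CommRing S] [Algebra A S] (h : SpNu ν) {c : Γ₀}
    (s : Multiset S) (hs : ∀ x ∈ s, SpI ν c x) (k : ℕ) (hk : k ≤ Multiset.card s) :
    SpI ν (c ^ (Multiset.card s - k)) ((s.map fun x => X - C x).prod.coeff k) := by
  induction s using Multiset.induction_on generalizing k with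
  | empty => 
    obtain rfl : k = 0 := by simpa using hk
    simpa using SpI.one h
  | cons x s ih =>
    have ih := ih (fun y hy => hs y (Multiset.mem_cons_of_mem hy))
    have hx := hs x (Multiset.mem_cons_self x s)
    rw [Multiset.map_cons, Multiset.prod_cons, Multiset.card_cons, sub_mul, coeff_sub, coeff_C_mul]
    rw [Multiset.card_cons] at hk
    apply SpI.sub h
    · cases k with
      | zero => rw [coeff_X_mul_zero]; exact SpI.zero h _
      | succ k =>
        rw [coeff_X_mul, Nat.add_sub_add_right]
        exact ih k (by omega)
    · by_cases hk' : k ≤ Multiset.card s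
      · rw [Nat.succ_sub hk', pow_succ']
        exact hx.mul h (ih k hk')
      · rw [coeff_eq_zero_of_natDegree_lt, mul_zero]
        · exact SpI.zero h _
        · have := natDegree_multiset_prod_le (s.map fun x => X - C x)
          refine lt_of_le_of_lt ?_ (not_le.1 hk')
          refine this.trans ?_
          rw [Multiset.map_map]
          refine (Multiset.sum_le_card_nsmul _ 1 ?_).trans (by simp)
          simp only [Multiset.mem_map]
          rintro _ ⟨y, _, rfl⟩
          exact natDegree_X_sub_C_le y

theorem sp_coeff_bound [IsDomain A] (h : SpNu ν) {c : Γ₀} (P : A[X]) (hP : P.Monic)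
    (hroots : ∀ y : AlgebraicClosure (FractionRing A), aeval y P = 0 → SpI ν c y) (k : ℕ)
    (hk : k ≤ P.natDegree) : ν (P.coeff k) ≤ c ^ (P.natDegree - k) := by
  let L := AlgebraicClosure (FractionRing A)
  have hi : Function.Injective (algebraMap A L) := by
    rw [IsScalarTower.algebraMap_eq A (FractionRing A) L]
    exact (algebraMap (FractionRing A) L).injective.comp (IsFractionRing.injective A (FractionRing A))
  apply SpI.of_inj h hi
  have hsp := IsAlgClosed.splits (P.map (algebraMap A L))
  have hm : (P.map (algebraMap A L)).Monic := hP.map _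
  have e := hsp.eq_prod_roots_of_monic hm
  have hc : Multiset.card (P.map (algebraMap A L)).roots = P.natDegree := by
    rw [← hsp.natDegree_eq_card_roots, hP.natDegree_map]
  rw [← coeff_map, e, ← hc]
  refine sp_coeff_prod h _ (fun x hx => hroots x ?_) k (hc ▸ hk)
  rw [mem_roots hm.ne_zero, IsRoot.def, eval_map_algebraMap] at hx
  exact hx
end


theorem sp_minpoly_dvd_aux {A B : Type*} (K : Type*)
    [CommRing A] [IsDomain A] [IsIntegrallyClosed A]
    [CommRing B] [Algebra A B] [NoZeroSMulDivisors A B] 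
    [Field K] [Algebra A K] [IsFractionRing A K] (b : B) (hb : IsIntegral A b)
    (Q : A[X]) (hQ : aeval b Q = 0) : minpoly A b ∣ Q := by
  classical
  set P := minpoly A b with hPdef
  have hPm : P.Monic := minpoly.monic hb
  have hi : Function.Injective (algebraMap A K) := IsFractionRing.injective A K
  let g := EuclideanDomain.gcd (P.map (algebraMap A K)) (Q.map (algebraMap A K))
  have hgP : g ∣ P.map (algebraMap A K) := EuclideanDomain.gcd_dvd_left _ _
  have hgQ : g ∣ Q.map (algebraMap A K) := EuclideanDomain.gcd_dvd_right _ _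
  have hPK0 : P.map (algebraMap A K) ≠ 0 := (hPm.map _).ne_zero
  have hg0 : g ≠ 0 := ne_zero_of_dvd_ne_zero hPK0 hgP
  have hl0 : g.leadingCoeff ≠ 0 := leadingCoeff_ne_zero.mpr hg0
  obtain ⟨D, hD⟩ := IsIntegrallyClosed.eq_map_mul_C_of_dvd K hPm hgP
  have hDm : D.Monic := by
    have h := congrArg leadingCoeff hD
    rw [leadingCoeff_mul, leadingCoeff_C, leadingCoeff_map_of_injective hi] at h
    have := mul_right_cancel₀ hl0 (h.trans (one_mul _).symm)
    exact hi (this.trans (map_one _).symm)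
  have hDg : D.map (algebraMap A K) ∣ g := ⟨_, hD.symm⟩
  have hDP : D ∣ P := (map_dvd_map _ hi hDm).1 (hDg.trans hgP)
  have hDQ : D ∣ Q := (map_dvd_map _ hi hDm).1 (hDg.trans hgQ)
  -- D kills b
  have hD' : D.map (algebraMap A K) = g * C (g.leadingCoeff)⁻¹ := by
    have := congrArg (· * C (g.leadingCoeff)⁻¹) hD
    simp only [mul_assoc, ← C_mul, mul_inv_cancel₀ hl0, C_1, mul_one] at this
    exact this
  have hex : ∃ u v : K[X], D.map (algebraMap A K) =
      P.map (algebraMap A K) * u + Q.map (algebraMap A K) * v := by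
    refine ⟨EuclideanDomain.gcdA (P.map (algebraMap A K)) (Q.map (algebraMap A K)) * C (g.leadingCoeff)⁻¹, EuclideanDomain.gcdB (P.map (algebraMap A K)) (Q.map (algebraMap A K)) * C (g.leadingCoeff)⁻¹, ?_⟩
    have hg := EuclideanDomain.gcd_eq_gcd_ab (P.map (algebraMap A K)) (Q.map (algebraMap A K))
    change g = _ at hg
    rw [hD']
    generalize C (g.leadingCoeff)⁻¹ = z
    rw [hg]
    ring
  obtain ⟨u, v, huv⟩ := hex
  obtain ⟨a, ham, ha⟩ := IsLocalization.integerNormalization_spec (nonZeroDivisors A) u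
  obtain ⟨a', ham', ha'⟩ := IsLocalization.integerNormalization_spec (nonZeroDivisors A) v
  set u' := IsLocalization.integerNormalization (nonZeroDivisors A) u
  set v' := IsLocalization.integerNormalization (nonZeroDivisors A) v
  have key : C (a * a' : A) * D = P * (C (a' : A) * u') + Q * (C (a : A) * v') := by
    apply map_injective _ hi
    simp only [Polynomial.map_mul, Polynomial.map_add, Polynomial.map_C, huv, ha, ha', map_mul,
      Algebra.smul_def, Polynomial.algebraMap_apply]
    ring
  have hDb : aeval b D = 0 := by
    have h := congrArg (aeval b) key
    rw [map_mul (aeval b) (C (a * a')), map_add, map_mul (aeval b) P, map_mul (aeval b) Q, hQ, minpoly.aeval,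
      zero_mul, zero_mul, add_zero, aeval_C,
      ← Algebra.smul_def] at h
    rcases eq_zero_or_eq_zero_of_smul_eq_zero h with h | h
    · exact absurd h (mul_ne_zero (nonZeroDivisors.ne_zero ham) (nonZeroDivisors.ne_zero ham'))
    · exact h
  have hdeg := minpoly.min A b hDm hDb
  have : P = D := eq_of_monic_of_dvd_of_natDegree_le hDm hPm hDP (natDegree_le_natDegree hdeg)
  rw [this]; exact hDQ

theorem sp_minpoly_dvd {A B : Type*}
    [CommRing A] [IsDomain A] [IsIntegrallyClosed A]
    [CommRing B] [Algebra A B] [NoZeroSMulDivisors A B] (b : B) (hb : IsIntegral A b)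
    (Q : A[X]) (hQ : aeval b Q = 0) : minpoly A b ∣ Q :=
  sp_minpoly_dvd_aux (FractionRing A) b hb Q hQ

theorem SpI.of_pow {A Γ₀ : Type*} [CommRing A] [LinearOrderedCommGroupWithZero Γ₀] {ν : A → Γ₀}
    {S : Type*} [CommRing S] [Algebra A S] (h : SpNu ν) {c : Γ₀} {x : S} {n : ℕ} (hn : 0 < n)
    (hx : SpI ν (c ^ n) (x ^ n)) : SpI ν c x := by
  classical
  obtain ⟨N, a, haN, hle, hsum⟩ := hx
  refine ⟨n * N, fun k => if n ∣ k then a (k / n) else 0, ?_, ?_, ?_⟩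
  · simp [hn, haN]
  · intro k hk
    by_cases hd : n ∣ k
    · obtain ⟨j, rfl⟩ := hd
      have hj : j ≤ N := Nat.le_of_mul_le_mul_left hk hn
      simp only [dvd_mul_right, if_true, Nat.mul_div_cancel_left j hn]
      rw [← Nat.mul_sub, pow_mul]
      exact hle j hj
    · simp [hd, h.h0]
  · rw [← hsum]
    symm
    refine Finset.sum_of_injOn (fun j => n * j) ?_ ?_ ?_ ?_
    · intro i _ j _ hij
      exact Nat.eq_of_mul_eq_mul_left hn hij
    · intro j hj
      simp only [Finset.coe_range, Set.mem_Iio] at hj ⊢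
      have := Nat.mul_le_mul_left n (Nat.lt_succ_iff.1 hj)
      omega
    · intro k hk hk'
      have : ¬ n ∣ k := by
        rintro ⟨j, rfl⟩
        apply hk'
        refine ⟨j, ?_, rfl⟩
        simp only [Finset.coe_range, Set.mem_Iio, Finset.mem_range] at hk ⊢
        have := Nat.le_of_mul_le_mul_left (Nat.lt_succ_iff.1 hk) hn
        omega
      simp [this]
    · intro j _
      simp [hn, pow_mul]

/-- Proposition 1.5 (prop_spectral-norm): if `Γ₀` is divisible (witnessed by the root
function), `A` is an integrally closed domain with a power-multiplicative `Γ₀`-valued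
seminorm, and `A → B` is injective with `B` integral and torsion-free over `A`, then
the spectral seminorm makes `B` a power-multiplicatively seminormed ring. -/
theorem spectralSemiNorm_is_powMul_seminorm {A B Γ₀ : Type*}
    [CommRing A] [IsDomain A] [IsIntegrallyClosed A]
    [CommRing B] [Algebra A B] [Algebra.IsIntegral A B] [NoZeroSMulDivisors A B]
    [LinearOrderedCommGroupWithZero Γ₀]
    (hinj : Function.Injective (algebraMap A B))
    (ν : A → Γ₀)
    (hν0 : ν 0 = 0) (hν1 : ν 1 = 1)
    (hνsub : ∀ x y : A, ν (x - y) ≤ max (ν x) (ν y))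
    (hνmul : ∀ x y : A, ν (x * y) ≤ ν x * ν y)
    (hνpow : ∀ (x : A) (n : ℕ), ν (x ^ n) = ν x ^ n)
    (root : Γ₀ → ℕ → Γ₀)
    (hroot : ∀ (γ : Γ₀) (n : ℕ), 1 ≤ n → root γ n ^ n = γ) :
    spectralSemiNorm ν root (0 : B) = 0 ∧
    spectralSemiNorm ν root (1 : B) = 1 ∧
    (∀ x y : B, spectralSemiNorm ν root (x - y) ≤
      max (spectralSemiNorm ν root x) (spectralSemiNorm ν root y)) ∧
    (∀ x y : B, spectralSemiNorm ν root (x * y) ≤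
      spectralSemiNorm ν root x * spectralSemiNorm ν root y) ∧
    (∀ (x : B) (n : ℕ), spectralSemiNorm ν root (x ^ n) = spectralSemiNorm ν root x ^ n) := by
  have h : SpNu ν := ⟨hν0, hν1, hνsub, hνmul, hνpow⟩
  have hB : Nontrivial B := hinj.nontrivial
  have hlt : ∀ (b : B) (c : Γ₀), spectralSemiNorm ν root b ≤ c ↔ SpI ν c b := by
    intro b c
    have hb : IsIntegral A b := Algebra.IsIntegral.isIntegral b
    have hm := minpoly.monic hb
    have h1 : spectralSemiNorm ν root b ≤ c ↔ ∀ k < (minpoly A b).natDegree,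
        ν ((minpoly A b).coeff k) ≤ c ^ ((minpoly A b).natDegree - k) := by
      rw [spectralSemiNorm, Finset.sup_le_iff]
      refine forall_congr' fun k => ?_
      rw [Finset.mem_range]
      refine imp_congr_right fun hk => ?_
      have hne : (minpoly A b).natDegree - k ≠ 0 := by omega
      rw [← pow_le_pow_iff_left₀ zero_le zero_le hne, hroot _ _ (by omega)]
    rw [h1]
    constructor
    · intro H
      refine SpI.of_aeval _ hm (minpoly.aeval A b) fun k hk => ?_
      rcases hk.lt_or_eq with hk | rfl
      · exact H k hk
      · rw [hm.coeff_natDegree, hν1]; simp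
    · intro H k hk
      obtain ⟨Q, -, hQb, hQ⟩ := H.exists_poly (AlgebraicClosure (FractionRing A))
      refine sp_coeff_bound h _ hm (fun y hy => hQ y ?_) k hk.le
      obtain ⟨R, rfl⟩ := sp_minpoly_dvd b hb Q hQb
      rw [map_mul, hy, zero_mul]
  have hself : ∀ b : B, SpI ν (spectralSemiNorm ν root b) b := fun b => (hlt b _).1 le_rfl
  have hone : spectralSemiNorm ν root (1 : B) = 1 := by
    apply le_antisymm ((hlt _ _).2 (SpI.one h))
    have := hself 1
    rw [← map_one (algebraMap A B)] at this
    have := this.of_inj h hinj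
    rwa [hν1, map_one] at this
  refine ⟨le_antisymm ((hlt _ _).2 (SpI.zero h _)) zero_le, hone, fun x y => ?_, fun x y => ?_,
    fun x n => ?_⟩
  · exact (hlt _ _).2 (((hlt x _).1 (le_max_left _ _)).sub h ((hlt y _).1 (le_max_right _ _)))
  · exact (hlt _ _).2 ((hself x).mul h (hself y))
  · apply le_antisymm ((hlt _ _).2 ((hself x).pow h n))
    rcases Nat.eq_zero_or_pos n with rfl | hn
    · rw [pow_zero, pow_zero, hone]
    · set d := spectralSemiNorm ν root (x ^ n) with hd
      have hr := hroot d n hn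
      rw [← hr]
      refine pow_le_pow_left₀ zero_le ((hlt _ _).2 ?_) n
      have hx := hself (x ^ n)
      rw [← hd, ← hr] at hx
      exact SpI.of_pow h hn hx
end

section
/- Let Γ₀ be a divisible linearly ordered commutative group with zero, K a field, L an algebraic field extension of K, v a Γ₀-valued valuation on K, and w a Γ₀-valued valuation on L whose restriction to K equals v. Let A := {x ∈ K : v(x) ≤ 1} and B := {x ∈ L : w(x) ≤ 1} be the corresponding valuation rings, and assume that B is integral over A. Then for every nonzero b ∈ B, writing Tⁿ + a₁Tⁿ⁻¹ + ⋯ + aₙ for the minimal polynomial of b over K (whose coefficients automatically lie in A, since A is integrally closed and b is integral over A), one has w(b) = max_{1 ≤ i ≤ n} v(a_i)^{1/i}; that is, the spectral norm of the extension A ⊆ B coincides with the valuation w. -/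
open Polynomial in
theorem aux_torsion {K L Γ₀ : Type*} [Field K] [Field L] [Algebra K L]
    [LinearOrderedCommGroupWithZero Γ₀]
    (v : Valuation K Γ₀) (w : Valuation L Γ₀)
    (hcomp : ∀ x : K, w (algebraMap K L x) = v x) (b : L) (hb : b ≠ 0)
    (hi : IsIntegral K b) :
    ∃ (m : ℕ) (c : K), 0 < m ∧ c ≠ 0 ∧ w b ^ m = v c := by
  classical
  set P := minpoly K b with hP
  have hP0 : P ≠ 0 := minpoly.ne_zero hi
  have hwb : w b ≠ 0 := (Valuation.ne_zero_iff w).2 hb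
  let f : ℕ → L := fun k => algebraMap K L (P.coeff k) * b ^ k
  have hf : ∀ k, w (f k) = v (P.coeff k) * w b ^ k := fun k => by simp [f, hcomp]
  have hsum : ∑ k ∈ P.support, f k = 0 := by
    have := minpoly.aeval K b
    rw [aeval_def, eval₂_eq_sum, Polynomial.sum] at this
    exact this
  obtain ⟨j, hj, hmax⟩ := Finset.exists_max_image P.support (fun k => w (f k))
    (by simpa using hP0)
  have hvj : v (P.coeff j) ≠ 0 := (Valuation.ne_zero_iff v).2 (mem_support_iff.1 hj)
  have : ∃ i ∈ P.support, i ≠ j ∧ w (f i) = w (f j) := by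
    by_contra hcon
    push Not at hcon
    have h := w.map_sum_eq_of_lt (f := f) hj (fun i hi => by
      simp only [Finset.mem_sdiff, Finset.mem_singleton] at hi
      exact lt_of_le_of_ne (hmax i hi.1) (hcon i hi.1 hi.2))
    rw [hsum, map_zero, hf] at h
    exact (mul_ne_zero hvj (pow_ne_zero _ hwb)) h.symm
  obtain ⟨i, hi, hij, he⟩ := this
  have hvi : v (P.coeff i) ≠ 0 := (Valuation.ne_zero_iff v).2 (mem_support_iff.1 hi)
  have key : ∀ i j : ℕ, i < j → P.coeff i ≠ 0 → P.coeff j ≠ 0 → w (f i) = w (f j) →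
      ∃ (m : ℕ) (c : K), 0 < m ∧ c ≠ 0 ∧ w b ^ m = v c := by
    intro i j hlt h1 h2 he
    refine ⟨j - i, P.coeff i / P.coeff j, by omega, div_ne_zero h1 h2, ?_⟩
    rw [hf, hf] at he
    obtain ⟨d, rfl⟩ := Nat.exists_eq_add_of_lt hlt
    have h2' : v (P.coeff (i + d + 1)) ≠ 0 := (Valuation.ne_zero_iff v).2 h2
    have : i + d + 1 - i = d + 1 := by omega
    rw [this, map_div₀, eq_div_iff h2']
    apply mul_right_cancel₀ (pow_ne_zero i hwb)
    rw [he, add_assoc i d 1, pow_add (w b) i (d + 1)]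
    ac_rfl
  rcases lt_or_gt_of_ne hij with h | h
  · exact key i j h (mem_support_iff.1 hi) (mem_support_iff.1 hj) he
  · exact key j i h (mem_support_iff.1 hj) (mem_support_iff.1 hi) he.symm

open Polynomial in
theorem aux_main_s4 {K L Γ₀ : Type*} [Field K] [Field L] [Algebra K L]
    [Algebra.IsAlgebraic K L] [LinearOrderedCommGroupWithZero Γ₀]
    (v : Valuation K Γ₀) (w : Valuation L Γ₀)
    (hcomp : ∀ x : K, w (algebraMap K L x) = v x)
    (hint : ∀ x : L, w x ≤ 1 →
      ∃ p : Polynomial K, p.Monic ∧ (∀ i : ℕ, v (p.coeff i) ≤ 1) ∧ Polynomial.aeval x p = 0)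
    (b : L) (hb : b ≠ 0) :
    (∀ k ≤ (minpoly K b).natDegree,
      v ((minpoly K b).coeff k) ≤ w b ^ ((minpoly K b).natDegree - k)) ∧
    v ((minpoly K b).coeff 0) = w b ^ (minpoly K b).natDegree := by
  have hi : IsIntegral K b := Algebra.IsIntegral.isIntegral b
  obtain ⟨m, c, hm, hc, hmc⟩ := aux_torsion v w hcomp b hb hi
  have hvc : v c ≠ 0 := (Valuation.ne_zero_iff v).2 hc
  let M := AlgebraicClosure L
  have hO := Valuation.integer.integers v
  have hA : ∀ x : L, w x ≤ 1 → IsIntegral v.integer x := by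
    intro x hx
    obtain ⟨p, hp, hpc, hpx⟩ := hint x hx
    have hl : p ∈ lifts (algebraMap v.integer K) := by
      rw [lifts_iff_coeff_lifts]
      exact fun n => ⟨⟨p.coeff n, hpc n⟩, rfl⟩
    obtain ⟨q, hq, -, hqm⟩ := lifts_and_natDegree_eq_and_monic hl hp
    refine ⟨q, hqm, ?_⟩
    rw [← hq, aeval_map_algebraMap] at hpx
    exact hpx
  have hKM : ∀ x : K, IsIntegral v.integer (algebraMap K M x) → v x ≤ 1 := by
    intro x hx
    rw [isIntegral_algebraMap_iff (algebraMap K M).injective] at hx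
    exact hO.isIntegral_iff_v_le_one.1 hx
  obtain ⟨t, ht⟩ := IsAlgClosed.exists_pow_nat_eq (algebraMap K M c) hm
  have ht0 : t ≠ 0 := by
    rintro rfl
    rw [zero_pow hm.ne'] at ht
    exact hc (by simpa using ht.symm)
  set P := minpoly K b with hP
  have hPm : P.Monic := minpoly.monic hi
  set n := P.natDegree with hn
  have hroots : ∀ r : M, aeval r P = 0 →
      r ≠ 0 ∧ IsIntegral v.integer (r * t⁻¹) ∧ IsIntegral v.integer (r * t⁻¹)⁻¹ := by
    intro r hr
    obtain ⟨φ, hφ⟩ : ∃ φ : L →ₐ[K] M, φ b = r :=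
      IntermediateField.exists_algHom_of_splits_of_aeval
        (fun s => ⟨Algebra.IsIntegral.isIntegral s, IsAlgClosed.splits _⟩) hr
    have hu : w (b ^ m * (algebraMap K L c)⁻¹) = 1 := by
      rw [map_mul, map_pow, map_inv₀, hcomp, hmc, mul_inv_cancel₀ hvc]
    have e : (r * t⁻¹) ^ m = φ (b ^ m * (algebraMap K L c)⁻¹) := by
      rw [mul_pow, inv_pow, ht, map_mul, map_pow, map_inv₀, hφ, φ.commutes]
    refine ⟨?_, IsIntegral.of_pow hm ?_, IsIntegral.of_pow hm ?_⟩
    · rw [← hφ]; simpa using hb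
    · rw [e]
      exact (hA _ hu.le).map (φ.restrictScalars v.integer)
    · rw [inv_pow, e, ← map_inv₀]
      exact (hA _ (by rw [map_inv₀, hu, inv_one])).map (φ.restrictScalars v.integer)
  set PM : M[X] := P.map (algebraMap K M) with hPM
  have hPMm : PM.Monic := hPm.map _
  set Q := PM.scaleRoots t⁻¹ with hQ
  have hQm : Q.Monic := (monic_scaleRoots_iff _).2 hPMm
  have hQn : Q.natDegree = n := by rw [hQ, natDegree_scaleRoots, hPM, natDegree_map]
  have hQc : ∀ k, Q.coeff k = algebraMap K M (P.coeff k) * (t⁻¹) ^ (n - k) := fun k => by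
    rw [hQ, coeff_scaleRoots, hPM, coeff_map, natDegree_map]
  have hQroot : ∀ x, Q.IsRoot x → IsIntegral v.integer x ∧ IsIntegral v.integer x⁻¹ := by
    intro x hx
    have h1 : aeval (x * t) P = 0 := by
      have h2 := scaleRoots_eval₂_mul (p := Q) (RingHom.id M) x t
      have h3 : Q.scaleRoots t = PM := by
        rw [hQ, ← scaleRoots_mul, inv_mul_cancel₀ ht0, scaleRoots_one]
      rw [h3] at h2
      have h4 : eval₂ (RingHom.id M) x Q = 0 := hx
      rw [h4, mul_zero, RingHom.id_apply, mul_comm, hPM, eval₂_map, RingHom.id_comp] at h2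
      exact h2
    have := (hroots _ h1).2
    rwa [mul_assoc, mul_inv_cancel₀ ht0, mul_one] at this
  have hQs : Q.Splits := IsAlgClosed.splits Q
  have hQi : ∀ k, IsIntegral v.integer (Q.coeff k) :=
    isIntegral_coeff_of_factors Q (by rw [hQm.leadingCoeff]; exact isIntegral_one) hQs
      (fun x hx => (hQroot x hx).1)
  have hinv : (Q.roots.map (fun x => x⁻¹)).prod = Q.roots.prod⁻¹ := by
    simpa using Multiset.prod_map_inv (m := Q.roots) (f := fun x => x)
  have hQ0 : IsIntegral v.integer (Q.coeff 0)⁻¹ := by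
    rw [hQs.coeff_zero_eq_prod_roots_of_monic hQm, mul_inv, ← inv_pow, inv_neg, inv_one,
      ← hinv]
    refine IsIntegral.mul ((isIntegral_one.neg).pow _) (IsIntegral.multiset_prod ?_)
    intro x hx
    obtain ⟨y, hy, rfl⟩ := Multiset.mem_map.1 hx
    exact (hQroot y (isRoot_of_mem_roots hy)).2
  have hpw : ∀ k, (Q.coeff k) ^ m = algebraMap K M (P.coeff k ^ m * (c⁻¹) ^ (n - k)) := by
    intro k
    rw [hQc, mul_pow, pow_right_comm, inv_pow t m, ht, map_mul, map_pow, map_pow, map_inv₀]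
  have hvpw : ∀ k, v (P.coeff k ^ m * (c⁻¹) ^ (n - k))
      = v (P.coeff k) ^ m * ((w b ^ (n - k)) ^ m)⁻¹ := by
    intro k
    rw [map_mul, map_pow, map_pow, map_inv₀, ← hmc, pow_right_comm, inv_pow]
  have hwb : 0 < w b := zero_lt_iff.2 ((Valuation.ne_zero_iff w).2 hb)
  have hle : ∀ k, v (P.coeff k) ≤ w b ^ (n - k) := by
    intro k
    have h1 := (hQi k).pow m
    rw [hpw] at h1
    have h2 := hKM _ h1
    rw [hvpw, ← div_eq_mul_inv, div_le_one₀ (pow_pos (pow_pos hwb _) _)] at h2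
    exact (pow_le_pow_iff_left₀ zero_le' zero_le' hm.ne').1 h2
  refine ⟨fun k _ => hle k, le_antisymm (by simpa using hle 0) ?_⟩
  have hP0 : P.coeff 0 ≠ 0 := minpoly.coeff_zero_ne_zero hi hb
  have h1 := hQ0.pow m
  rw [inv_pow, hpw, ← map_inv₀] at h1
  have h2 := hKM _ h1
  rw [map_inv₀, hvpw, mul_inv, inv_inv, mul_comm, ← div_eq_mul_inv,
    div_le_one₀ (pow_pos (zero_lt_iff.2 ((Valuation.ne_zero_iff v).2 hP0)) _)] at h2
  have h3 := (pow_le_pow_iff_left₀ zero_le' zero_le' hm.ne').1 h2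
  simpa using h3

/-- Lemma 1.7(iii) (lem_nobigdeal): let `v`, `w` be valuations on `K ⊆ L` (an algebraic
extension of fields) with `w` extending `v`, with values in a divisible `Γ₀` (divisibility
witnessed by the root function), and suppose the valuation ring `B = {x ∈ L : w x ≤ 1}`
is integral over `A = {x ∈ K : v x ≤ 1}`.  Then for every nonzero `b ∈ B`, writing
`Tⁿ + a₁Tⁿ⁻¹ + ⋯ + aₙ` for the minimal polynomial of `b` over `K`, one has
`w b = max_{1 ≤ i ≤ n} v(aᵢ)^{1/i}`: the spectral norm of the extension coincides with `w`. -/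
theorem spectralNorm_eq_valuation {K L Γ₀ : Type*} [Field K] [Field L] [Algebra K L]
    [Algebra.IsAlgebraic K L] [LinearOrderedCommGroupWithZero Γ₀]
    (v : Valuation K Γ₀) (w : Valuation L Γ₀)
    (hcomp : ∀ x : K, w (algebraMap K L x) = v x)
    (root : Γ₀ → ℕ → Γ₀)
    (hroot : ∀ (γ : Γ₀) (n : ℕ), 1 ≤ n → root γ n ^ n = γ)
    (hint : ∀ x : L, w x ≤ 1 →
      ∃ p : Polynomial K, p.Monic ∧ (∀ i : ℕ, v (p.coeff i) ≤ 1) ∧ Polynomial.aeval x p = 0) :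
    ∀ b : L, b ≠ 0 → w b ≤ 1 →
      w b = (Finset.range (minpoly K b).natDegree).sup fun k =>
        root (v ((minpoly K b).coeff k)) ((minpoly K b).natDegree - k) := by
  intro b hb _
  obtain ⟨h1, h2⟩ := aux_main_s4 v w hcomp hint b hb
  have hi : IsIntegral K b := Algebra.IsIntegral.isIntegral b
  have hn : 0 < (minpoly K b).natDegree := minpoly.natDegree_pos hi
  apply le_antisymm
  · have h3 : root (v ((minpoly K b).coeff 0)) ((minpoly K b).natDegree - 0) = w b := by
      have h4 := hroot (v ((minpoly K b).coeff 0)) ((minpoly K b).natDegree - 0) (by omega)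
      rw [Nat.sub_zero] at h4 ⊢
      nth_rw 2 [h2] at h4
      exact (pow_left_inj₀ zero_le' zero_le' hn.ne').1 h4
    have h5 := Finset.le_sup (f := fun k =>
      root (v ((minpoly K b).coeff k)) ((minpoly K b).natDegree - k)) (Finset.mem_range.2 hn)
    exact h3.symm.le.trans h5
  · refine Finset.sup_le fun k hk => ?_
    have hk' := Finset.mem_range.1 hk
    have h4 := hroot (v ((minpoly K b).coeff k)) ((minpoly K b).natDegree - k) (by omega)
    refine (pow_le_pow_iff_left₀ zero_le' zero_le'
      (n := (minpoly K b).natDegree - k) (by omega)).1 ?_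
    rw [h4]
    exact h1 k hk'.le
end

section
/- Let R be a commutative ring, n and m positive integers, and t = (t_{ij})_{1 ≤ i,j ≤ n} an n×n array whose entries t_{ij} are m×m matrices over R that commute pairwise (t_{ij}·t_{kl} = t_{kl}·t_{ij} for all i, j, k, l). Let T be the (nm)×(nm) matrix over R obtained by assembling the blocks, i.e. T_{(i,a),(j,b)} := (t_{ij})_{ab}, and let D := Σ_{σ ∈ Sₙ} sign(σ) · t_{1σ(1)}·t_{2σ(2)}⋯t_{nσ(n)} ∈ M_m(R) be the determinant of t computed in the commutative subring of M_m(R) generated by the t_{ij} (the order of the factors in each product is irrelevant by the commutation hypothesis). Then det(T) = det(D). -/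
/-- Lemma 2.2 (lem_blocks): the determinant of an `(nm)×(nm)` block matrix whose `m×m`
blocks commute pairwise equals the determinant of its block determinant
`D = Σ_σ sign(σ) · t_{1σ(1)}⋯t_{nσ(n)}` (computed in the commutative subring of `M_m(R)`
generated by the blocks). -/
theorem det_blocks_comm {R : Type*} [CommRing R] {n m : ℕ} (hn : 0 < n) (hm : 0 < m)
    (t : Fin n → Fin n → Matrix (Fin m) (Fin m) R)
    (hcomm : ∀ i j k l : Fin n, t i j * t k l = t k l * t i j) :
    (Matrix.of fun p q : Fin n × Fin m => t p.1 q.1 p.2 q.2).det =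
      (∑ σ : Equiv.Perm (Fin n), (Equiv.Perm.sign σ : ℤ) •
        ((List.finRange n).map fun i => t i (σ i)).prod).det := by
  classical
  let s : Set (Matrix (Fin m) (Fin m) R) := Set.range fun p : Fin n × Fin n => t p.1 p.2
  letI : CommRing (Subring.closure s) := Subring.closureCommRingOfComm (by
    rintro _ ⟨p, rfl⟩ _ ⟨q, rfl⟩
    exact hcomm _ _ _ _)
  let f : Subring.closure s →+* Matrix (Fin m) (Fin m) R := (Subring.closure s).subtype
  let M : Matrix (Fin n) (Fin n) (Subring.closure s) :=
    Matrix.of fun i j => ⟨t i j, Subring.subset_closure ⟨(i, j), rfl⟩⟩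
  have hf : ∀ i j, f (M i j) = t i j := fun _ _ => rfl
  have h := Matrix.det_det M f
  have h1 : f M.det = ∑ σ : Equiv.Perm (Fin n), (Equiv.Perm.sign σ : ℤ) •
        ((List.finRange n).map fun i => t i (σ i)).prod := by
    rw [← Matrix.det_transpose, Matrix.det_apply, map_sum]
    refine Finset.sum_congr rfl fun σ _ => ?_
    rw [Units.smul_def, map_zsmul, ← List.prod_ofFn, map_list_prod, List.ofFn_eq_map,
      List.map_map]
    rfl
  rw [← h1, h]
  rfl
end

section
/- Let A be a noetherian commutative ring and I, J ⊆ A two ideals. For an ideal 𝔞 let A^∧_𝔞 := lim_n A/𝔞ⁿ denote the 𝔞-adic completion. The inclusions (I ∩ J)ⁿ ⊆ Iⁿ, (I ∩ J)ⁿ ⊆ Jⁿ, Iⁿ ⊆ (I + J)ⁿ and Jⁿ ⊆ (I + J)ⁿ induce a commutative square of natural ring homomorphisms A^∧_{I∩J} → A^∧_I → A^∧_{I+J} and A^∧_{I∩J} → A^∧_J → A^∧_{I+J}. This square is cartesian: the induced ring homomorphism from A^∧_{I∩J} to the fibre product A^∧_I ×_{A^∧_{I+J}} A^∧_J is bijective;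 equivalently, for every x ∈ A^∧_I and y ∈ A^∧_J having the same image in A^∧_{I+J}, there is a unique z ∈ A^∧_{I∩J} mapping to x and to y. -/
theorem exists_pow_inf_pow_le_aux {A : Type*} [CommRing A] [IsNoetherianRing A]
    (I J : Ideal A) (n : ℕ) : ∃ m, n ≤ m ∧ I ^ m ⊓ J ^ m ≤ (I ⊓ J) ^ n := by
  obtain ⟨k, hk⟩ := Ideal.exists_pow_inf_eq_pow_smul I (J ^ n : Submodule A A)
  refine ⟨n + k, Nat.le_add_right _ _, ?_⟩
  have h := hk (n + k) (Nat.le_add_left _ _)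
  simp only [smul_eq_mul, Ideal.mul_top, Nat.add_sub_cancel] at h
  calc I ^ (n + k) ⊓ J ^ (n + k) ≤ I ^ (n + k) ⊓ J ^ n :=
        inf_le_inf_left _ (Ideal.pow_le_pow_right (Nat.le_add_right _ _))
    _ = I ^ n * (I ^ k ⊓ J ^ n) := h
    _ ≤ I ^ n * J ^ n := Ideal.mul_mono_right inf_le_right
    _ = (I * J) ^ n := (mul_pow _ _ _).symm
    _ ≤ (I ⊓ J) ^ n := Ideal.pow_right_mono Ideal.mul_le_inf n

/-- Lemma 3.1(i) (lem_various-compl): for ideals `I`, `J` of a noetherian ring `A`, the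
square of adic completions `A^∧_{I∩J} → A^∧_I, A^∧_J → A^∧_{I+J}` is cartesian.
Completions are rendered as compatible families of elements of the quotients `A ⧸ 𝔞ⁿ`,
with compatibility and the transition maps expressed via representatives (which is
equivalent, the quotient maps being surjective): given compatible families `x` over the
powers of `I` and `y` over the powers of `J` with the same image over the powers of
`I + J`, there is a unique compatible family `z` over the powers of `I ∩ J` mapping to
`x` and to `y`. -/
theorem completion_square_cartesian {A : Type*} [CommRing A] [IsNoetherianRing A]
    (I J : Ideal A)
    (x : ∀ n : ℕ, A ⧸ I ^ n) (y : ∀ n : ℕ, A ⧸ J ^ n)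
    (hx : ∀ m n : ℕ, m ≤ n → ∀ a : A,
      Ideal.Quotient.mk (I ^ n) a = x n → Ideal.Quotient.mk (I ^ m) a = x m)
    (hy : ∀ m n : ℕ, m ≤ n → ∀ a : A,
      Ideal.Quotient.mk (J ^ n) a = y n → Ideal.Quotient.mk (J ^ m) a = y m)
    (hxy : ∀ (n : ℕ) (a b : A),
      Ideal.Quotient.mk (I ^ n) a = x n → Ideal.Quotient.mk (J ^ n) b = y n →
      Ideal.Quotient.mk ((I ⊔ J) ^ n) a = Ideal.Quotient.mk ((I ⊔ J) ^ n) b) :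
    ∃! z : ∀ n : ℕ, A ⧸ (I ⊓ J) ^ n,
      (∀ m n : ℕ, m ≤ n → ∀ a : A,
        Ideal.Quotient.mk ((I ⊓ J) ^ n) a = z n → Ideal.Quotient.mk ((I ⊓ J) ^ m) a = z m) ∧
      (∀ (n : ℕ) (a : A), Ideal.Quotient.mk ((I ⊓ J) ^ n) a = z n →
        Ideal.Quotient.mk (I ^ n) a = x n ∧ Ideal.Quotient.mk (J ^ n) a = y n) := by
  have hc : ∀ m : ℕ, ∃ c : A, Ideal.Quotient.mk (I ^ m) c = x m ∧
      Ideal.Quotient.mk (J ^ m) c = y m := by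
    intro m
    obtain ⟨a, ha⟩ := Ideal.Quotient.mk_surjective (x (m + m))
    obtain ⟨b, hb⟩ := Ideal.Quotient.mk_surjective (y (m + m))
    have h := Ideal.sup_pow_add_le_pow_sup_pow (Ideal.Quotient.eq.1 (hxy _ a b ha hb))
    obtain ⟨i, hi, j, hj, hij⟩ := Submodule.mem_sup.1 h
    refine ⟨a - i, ?_, ?_⟩
    · rw [← hx m (m + m) (Nat.le_add_left _ _) a ha, Ideal.Quotient.eq]
      have : a - i - a = -i := by ring
      rw [this]
      exact neg_mem hi
    · rw [← hy m (m + m) (Nat.le_add_left _ _) b hb, Ideal.Quotient.eq]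
      have : a - i - b = j := by linear_combination -hij
      rw [this]
      exact hj
  choose c hcx hcy using hc
  choose f hfn hf using exists_pow_inf_pow_le_aux I J
  have key : ∀ (n : ℕ) (a b : A), Ideal.Quotient.mk (I ^ f n) a = x (f n) →
      Ideal.Quotient.mk (J ^ f n) a = y (f n) → Ideal.Quotient.mk (I ^ f n) b = x (f n) →
      Ideal.Quotient.mk (J ^ f n) b = y (f n) →
      Ideal.Quotient.mk ((I ⊓ J) ^ n) a = Ideal.Quotient.mk ((I ⊓ J) ^ n) b := by
    intro n a b h1 h2 h3 h4
    exact Ideal.Quotient.eq.2 (hf n ⟨Ideal.Quotient.eq.1 (h1.trans h3.symm),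
      Ideal.Quotient.eq.1 (h2.trans h4.symm)⟩)
  have mono : ∀ (K L : Ideal A) (a b : A), K ≤ L →
      Ideal.Quotient.mk K a = Ideal.Quotient.mk K b →
      Ideal.Quotient.mk L a = Ideal.Quotient.mk L b := fun K L a b h hab =>
    Ideal.Quotient.eq.2 (h (Ideal.Quotient.eq.1 hab))
  refine ⟨fun n => Ideal.Quotient.mk _ (c (f n)), ⟨?_, ?_⟩, ?_⟩
  · intro m n hmn a ha
    have h1 := mono _ _ _ _ (Ideal.pow_le_pow_right hmn) ha
    have h2 := key n (c (max (f m) (f n))) (c (f n))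
      (hx _ _ (le_max_right _ _) _ (hcx _)) (hy _ _ (le_max_right _ _) _ (hcy _)) (hcx _) (hcy _)
    have h3 := key m (c (max (f m) (f n))) (c (f m))
      (hx _ _ (le_max_left _ _) _ (hcx _)) (hy _ _ (le_max_left _ _) _ (hcy _)) (hcx _) (hcy _)
    exact h1.trans ((mono _ _ _ _ (Ideal.pow_le_pow_right hmn) h2).symm.trans h3)
  · intro n a ha
    exact ⟨(mono _ _ _ _ (Ideal.pow_right_mono inf_le_left n) ha).trans
        (hx _ _ (hfn n) _ (hcx _)),
      (mono _ _ _ _ (Ideal.pow_right_mono inf_le_right n) ha).trans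
        (hy _ _ (hfn n) _ (hcy _))⟩
  · rintro z ⟨hz1, hz2⟩
    funext n
    obtain ⟨a, ha⟩ := Ideal.Quotient.mk_surjective (z (f n))
    obtain ⟨h1, h2⟩ := hz2 _ a ha
    rw [← hz1 n (f n) (hfn n) a ha]
    exact key n a _ h1 h2 (hcx _) (hcy _)
end

section
/- Let A be a noetherian commutative ring and I, J ⊆ A two ideals. For every n ∈ ℕ set Aₙ := A/Jⁿ, and let (Aₙ)^∧_I denote the completion of Aₙ with respect to the ideal I·Aₙ. Then the natural A-algebra homomorphism A^∧_{I+J} → lim_n (Aₙ)^∧_I, from the (I+J)-adic completion of A to the inverse limit over n of the I-adic completions of the quotients A/Jⁿ, is an isomorphism. -/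
/-- Compatibility of a family over the powers of an ideal, expressed via representatives. -/
def IsCompatFamily {A : Type*} [CommRing A] (I : Ideal A) (z : ∀ n : ℕ, A ⧸ I ^ n) : Prop :=
  ∀ m n : ℕ, m ≤ n → ∀ a : A,
    Ideal.Quotient.mk (I ^ n) a = z n → Ideal.Quotient.mk (I ^ m) a = z m

/-- Double compatibility of a family over the ideals `I^k + Jⁿ`; such families are exactly
the elements of `lim_n (A/Jⁿ)^∧_I`, using the identification
`(A/Jⁿ) ⧸ (I·(A/Jⁿ))^k = A ⧸ (I^k + Jⁿ)`. -/
def IsBicompatFamily {A : Type*} [CommRing A] (I J : Ideal A)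
    (w : ∀ n k : ℕ, A ⧸ (I ^ k ⊔ J ^ n)) : Prop :=
  ∀ n k n' k' : ℕ, n ≤ n' → k ≤ k' → ∀ a : A,
    Ideal.Quotient.mk (I ^ k' ⊔ J ^ n') a = w n' k' →
    Ideal.Quotient.mk (I ^ k ⊔ J ^ n) a = w n k

/-- The family over the ideals `I^k + Jⁿ` is the image of the family `z` over the powers
of `I + J` under the natural maps `A ⧸ (I+J)^{n+k} → A ⧸ (I^k + Jⁿ)`, expressed via
representatives. -/
def IsImageFamily {A : Type*} [CommRing A] (I J : Ideal A)
    (z : ∀ n : ℕ, A ⧸ (I ⊔ J) ^ n) (w : ∀ n k : ℕ, A ⧸ (I ^ k ⊔ J ^ n)) : Prop :=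
  ∀ n k : ℕ, ∀ a : A,
    Ideal.Quotient.mk ((I ⊔ J) ^ (n + k)) a = z (n + k) →
    Ideal.Quotient.mk (I ^ k ⊔ J ^ n) a = w n k

/-- Lemma 3.1(ii) (lem_various-compl): for ideals `I`, `J` of a noetherian ring `A`, the
natural `A`-algebra homomorphism `A^∧_{I+J} → lim_n (A/Jⁿ)^∧_I` is an isomorphism.
Rendered elementwise: the natural map from compatible families over the powers of `I + J`
to doubly compatible families over the ideals `I^k + Jⁿ` is well defined, injective and
surjective. -/
theorem completion_sum_eq_limit_completion {A : Type*} [CommRing A] [IsNoetherianRing A]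
    (I J : Ideal A) :
    (∀ z : ∀ n : ℕ, A ⧸ (I ⊔ J) ^ n, IsCompatFamily (I ⊔ J) z →
      ∀ w : ∀ n k : ℕ, A ⧸ (I ^ k ⊔ J ^ n), IsImageFamily I J z w → IsBicompatFamily I J w) ∧
    (∀ z z' : ∀ n : ℕ, A ⧸ (I ⊔ J) ^ n, IsCompatFamily (I ⊔ J) z → IsCompatFamily (I ⊔ J) z' →
      ∀ w : ∀ n k : ℕ, A ⧸ (I ^ k ⊔ J ^ n),
        IsImageFamily I J z w → IsImageFamily I J z' w → z = z') ∧
    (∀ w : ∀ n k : ℕ, A ⧸ (I ^ k ⊔ J ^ n), IsBicompatFamily I J w →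
      ∃ z : ∀ n : ℕ, A ⧸ (I ⊔ J) ^ n, IsCompatFamily (I ⊔ J) z ∧ IsImageFamily I J z w) := by
  have hK : ∀ n k : ℕ, (I ⊔ J) ^ (n + k) ≤ I ^ k ⊔ J ^ n := fun n k => by
    rw [add_comm n k]; exact Ideal.sup_pow_add_le_pow_sup_pow
  have hL : ∀ n : ℕ, I ^ n ⊔ J ^ n ≤ (I ⊔ J) ^ n := fun n =>
    sup_le (Ideal.pow_right_mono le_sup_left n) (Ideal.pow_right_mono le_sup_right n)
  have hmk : ∀ {P Q : Ideal A}, P ≤ Q → ∀ {a b : A},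
      Ideal.Quotient.mk P a = Ideal.Quotient.mk P b →
      Ideal.Quotient.mk Q a = Ideal.Quotient.mk Q b := fun {P Q} h {a b} hab =>
    Ideal.Quotient.eq.2 (h (Ideal.Quotient.eq.1 hab))
  refine ⟨?_, ?_, ?_⟩
  · intro z hz w hw n k n' k' hn hk a ha
    obtain ⟨b, hb⟩ := Ideal.Quotient.mk_surjective (z (n' + k'))
    have h1 := hw n' k' b hb
    have h2 := hw n k b (hz _ _ (add_le_add hn hk) b hb)
    rw [← h2]
    exact hmk (sup_le_sup (Ideal.pow_le_pow_right hk) (Ideal.pow_le_pow_right hn))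
      (ha.trans h1.symm)
  · intro z z' hz hz' w hw hw'
    funext n
    obtain ⟨b, hb⟩ := Ideal.Quotient.mk_surjective (z (n + n))
    obtain ⟨b', hb'⟩ := Ideal.Quotient.mk_surjective (z' (n + n))
    rw [← hz n (n + n) (Nat.le_add_left n n) b hb, ← hz' n (n + n) (Nat.le_add_left n n) b' hb']
    exact hmk (hL n) ((hw n n b hb).trans (hw' n n b' hb').symm)
  · intro w hw
    choose a ha using fun n => Ideal.Quotient.mk_surjective (w n n)
    refine ⟨fun n => Ideal.Quotient.mk _ (a n), ?_, ?_⟩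
    · intro m n hmn b hb
      exact (hmk (Ideal.pow_le_pow_right hmn) hb).trans
        (hmk (hL m) ((hw m m n n hmn hmn _ (ha n)).trans (ha m).symm))
    · intro n k b hb
      exact (hmk (hK n k) hb).trans
        (hw n k (n + k) (n + k) (Nat.le_add_right n k) (Nat.le_add_left k n) _ (ha _))
end

section
/- Let p be a prime number, R a commutative ring in which p is invertible, H a finite group, P a p-subgroup of H, and {1} = Pₙ ⊆ Pₙ₋₁ ⊆ ⋯ ⊆ P₁ ⊆ P₀ = P a chain of subgroups, each of which is normal in H; set e_i := |P_i|⁻¹ · Σ_{g ∈ P_i} g ∈ R[H]. Then every left R[H]-module M admits the break decomposition M = M₋₁ ⊕ M₀ ⊕ ⋯ ⊕ M_{n−1}, an internal direct sum of R[H]-submodules, where M₋₁ := e₀·M and M_i := e_{i+1}(1 − e_i)·M for 0 ≤ i ≤ n−1, and this decomposition satisfies: M₋₁ = M^P, the submodule of P-invariants; M_i^{P_i} = 0 for every 0 ≤ i ≤ n−1; and M_i^{P_j} = M_i whenever j > i. -/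
/-- The averaging element `e_Q := |Q|⁻¹ Σ_{g ∈ Q} g` of the group algebra `R[H]`,
for a subgroup `Q` of `H` whose order is invertible in `R`. -/
noncomputable def avgIdem (R : Type*) {H : Type*} [CommRing R] [Group H]
    (Q : Subgroup H) : MonoidAlgebra R H :=
  Ring.inverse (Nat.card Q : R) • ∑ᶠ g : Q, MonoidAlgebra.of R H (g : H)

/-- The orthogonal family of central idempotents `f₀ := e₀`, `f_i := e_i·(1 − e_{i−1})`
associated to a chain of normal subgroups `P 0 ⊇ P 1 ⊇ ⋯ ⊇ P n = 1`.  In the indexing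
of the paper, `f_i` cuts out the break component `M_{i-1}` of an `R[H]`-module `M`. -/
noncomputable def brkIdem (R : Type*) {H : Type*} [CommRing R] [Group H]
    (P : ℕ → Subgroup H) (i : ℕ) : MonoidAlgebra R H :=
  if i = 0 then avgIdem R (P 0) else avgIdem R (P i) * (1 - avgIdem R (P (i - 1)))

theorem avg_aux_of_mul {R H : Type*} [CommRing R] [Group H] [Finite H]
    (Q : Subgroup H) (g : H) (hg : g ∈ Q) :
    MonoidAlgebra.of R H g * avgIdem R Q = avgIdem R Q := by
  classical
  haveI := Fintype.ofFinite Q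
  unfold avgIdem
  rw [finsum_eq_sum_of_fintype, mul_smul_comm, Finset.mul_sum]
  congr 1
  refine Fintype.sum_equiv (Equiv.mulLeft (⟨g, hg⟩ : Q)) _ _ ?_
  intro x
  rw [← map_mul]
  rfl

theorem avg_aux_smul {R H : Type*} [CommRing R] [Group H] [Finite H]
    (Q : Subgroup H) (hQ : IsUnit (Nat.card Q : R))
    {M : Type*} [AddCommGroup M] [Module (MonoidAlgebra R H) M] (x : M)
    (hx : ∀ g ∈ Q, MonoidAlgebra.of R H g • x = x) :
    avgIdem R Q • x = x := by
  classical
  haveI := Fintype.ofFinite Q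
  unfold avgIdem
  rw [finsum_eq_sum_of_fintype, Algebra.smul_def, mul_smul, Finset.sum_smul,
    Finset.sum_congr rfl (fun (g : Q) _ => hx g g.2), Finset.sum_const, Finset.card_univ,
    ← Nat.card_eq_fintype_card, ← Nat.cast_smul_eq_nsmul (MonoidAlgebra R H), ← mul_smul,
    ← map_natCast (algebraMap R (MonoidAlgebra R H)), ← map_mul,
    Ring.inverse_mul_cancel _ hQ, map_one, one_smul]

theorem avg_aux_comm {R H : Type*} [CommRing R] [Group H] [Finite H]
    (Q : Subgroup H) (hQ : Q.Normal) (r : MonoidAlgebra R H) :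
    Commute (avgIdem R Q) r := by
  classical
  haveI := Fintype.ofFinite Q
  have key : ∀ h : H, avgIdem R Q * MonoidAlgebra.of R H h
      = MonoidAlgebra.of R H h * avgIdem R Q := by
    intro h
    unfold avgIdem
    rw [finsum_eq_sum_of_fintype, mul_smul_comm, smul_mul_assoc, Finset.mul_sum,
      Finset.sum_mul]
    congr 1
    symm
    refine Fintype.sum_equiv (MulAut.conjNormal h : MulAut Q).toEquiv _ _ ?_
    intro x
    rw [← map_mul, ← map_mul]
    congr 1
    simp
  induction r using MonoidAlgebra.induction_on with
  | of h => exact key h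
  | add a b ha hb => exact ha.add_right hb
  | smul c a ha => exact ha.smul_right c

/-- §3.1 of Chapter 4 (subsec_breaks): every left `R[H]`-module `M` admits the break
decomposition `M = M₋₁ ⊕ M₀ ⊕ ⋯ ⊕ M_{n−1}` into `R[H]`-submodules, where (in shifted
indexing) the component `M_{k-1}` is `{x | f_k • x = x}`, with: `M₋₁ = M^P`;
`M_i^{P_i} = 0` for `0 ≤ i ≤ n−1`; and `M_i^{P_j} = M_i` whenever `j > i`. -/
theorem break_decomposition {R H : Type*} [CommRing R] [Group H] [Finite H]
    (p : ℕ) (hp : p.Prime) (hpR : IsUnit (p : R))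
    (n : ℕ) (P : ℕ → Subgroup H)
    (hPp : IsPGroup p (P 0))
    (hchain : ∀ i j : ℕ, i ≤ j → j ≤ n → P j ≤ P i)
    (hbot : P n = ⊥)
    (hnorm : ∀ i ≤ n, (P i).Normal)
    {M : Type*} [AddCommGroup M] [Module (MonoidAlgebra R H) M] :
    -- the components sum to `M` …
    (∀ x : M, ∑ i ∈ Finset.range (n + 1), brkIdem R P i • x = x) ∧
    -- … the sum is direct …
    (∀ c : ℕ → M, (∀ i ≤ n, brkIdem R P i • c i = c i) →
      ∑ i ∈ Finset.range (n + 1), c i = 0 → ∀ i ≤ n, c i = 0) ∧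
    -- … and each component is an `R[H]`-submodule
    (∀ i ≤ n, ∀ (r : MonoidAlgebra R H) (x : M),
      brkIdem R P i • x = x → brkIdem R P i • (r • x) = r • x) ∧
    -- `M₋₁ = M^P`
    (∀ x : M, brkIdem R P 0 • x = x ↔ ∀ g ∈ P 0, MonoidAlgebra.of R H g • x = x) ∧
    -- `M_i^{P_i} = 0` for `i ≥ 0` (component `k = i + 1`)
    (∀ k : ℕ, 1 ≤ k → k ≤ n → ∀ x : M, brkIdem R P k • x = x →
      (∀ g ∈ P (k - 1), MonoidAlgebra.of R H g • x = x) → x = 0) ∧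
    -- `M_i^{P_j} = M_i` for `j > i` (component `k = i + 1`, subgroups `P j` with `j ≥ k`)
    (∀ k : ℕ, 1 ≤ k → k ≤ n → ∀ j : ℕ, k ≤ j → j ≤ n → ∀ x : M,
      brkIdem R P k • x = x → ∀ g ∈ P j, MonoidAlgebra.of R H g • x = x) := by
  have hcard : ∀ i ≤ n, IsUnit (Nat.card (P i) : R) := by
    intro i hi
    haveI : Fact p.Prime := ⟨hp⟩
    have h1 : IsPGroup p (P i) := hPp.to_le (hchain 0 i (Nat.zero_le _) hi)
    obtain ⟨m, hm⟩ := IsPGroup.iff_card.mp h1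
    rw [hm, Nat.cast_pow]
    exact hpR.pow m
  have hmul : ∀ i j, i ≤ j → j ≤ n →
      avgIdem R (P j) * avgIdem R (P i) = avgIdem R (P i) := by
    intro i j hij hj
    exact avg_aux_smul (P j) (hcard j hj) (avgIdem R (P i))
      (fun g hg => avg_aux_of_mul (P i) g (hchain i j hij hj hg))
  have hn1 : avgIdem R (P n) = 1 := by
    have := avg_aux_smul (P n) (hcard n le_rfl) (1 : MonoidAlgebra R H) (by
      intro g hg
      rw [hbot, Subgroup.mem_bot] at hg
      rw [hg, map_one, one_smul])
    simpa using this
  have hcomm : ∀ i ≤ n, ∀ r, Commute (avgIdem R (P i)) r :=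
    fun i hi r => avg_aux_comm (P i) (hnorm i hi) r
  have hf0 : brkIdem R P 0 = avgIdem R (P 0) := by simp [brkIdem]
  have hfs : ∀ i, brkIdem R P (i + 1) = avgIdem R (P (i + 1)) * (1 - avgIdem R (P i)) := by
    intro i; simp [brkIdem]
  have hfc : ∀ i ≤ n, ∀ r, Commute (brkIdem R P i) r := by
    intro i hi r
    cases i with
    | zero => rw [hf0]; exact hcomm 0 hi r
    | succ i =>
      rw [hfs]
      exact (hcomm _ hi r).mul_left ((Commute.one_left r).sub_left (hcomm i (by omega) r))
  have hsum : ∀ k ≤ n, ∑ i ∈ Finset.range (k + 1), brkIdem R P i = avgIdem R (P k) := by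
    intro k
    induction k with
    | zero => intro _; simp [hf0]
    | succ k ih =>
      intro hk
      rw [Finset.sum_range_succ, ih (by omega), hfs, mul_sub, mul_one,
        hmul k (k + 1) (by omega) hk]
      abel
  have hef : ∀ i j, i ≤ j → j ≤ n → avgIdem R (P j) * brkIdem R P i = brkIdem R P i := by
    intro i j hij hj
    cases i with
    | zero => rw [hf0]; exact hmul 0 j hij hj
    | succ i => rw [hfs, ← mul_assoc, hmul _ j hij hj]
  have horth1 : ∀ i j, i < j → j ≤ n → brkIdem R P j * brkIdem R P i = 0 := by
    intro i j hij hj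
    obtain ⟨j, rfl⟩ : ∃ m, j = m + 1 := ⟨j - 1, by omega⟩
    rw [hfs, mul_assoc, sub_mul, one_mul, hef i j (by omega) (by omega), sub_self, mul_zero]
  have horth : ∀ i j, i ≠ j → i ≤ n → j ≤ n → brkIdem R P i * brkIdem R P j = 0 := by
    intro i j hij hi hj
    rcases lt_or_gt_of_ne hij with h | h
    · rw [(hfc i hi _).eq]; exact horth1 i j h hj
    · exact horth1 j i h hi
  have hinv : ∀ k ≤ n, ∀ x : M, brkIdem R P k • x = x → ∀ g ∈ P k,
      MonoidAlgebra.of R H g • x = x := by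
    intro k hk x hx g hg
    rw [← hx, ← mul_smul, ← hef k k le_rfl hk, ← mul_assoc, avg_aux_of_mul (P k) g hg]
  refine ⟨?_, ?_, ?_, ?_, ?_, ?_⟩
  · intro x
    rw [← Finset.sum_smul, hsum n le_rfl, hn1, one_smul]
  · intro c hc h0 i hi
    have h := congrArg (fun y => brkIdem R P i • y) h0
    simp only [Finset.smul_sum, smul_zero] at h
    rw [Finset.sum_eq_single i, hc i hi] at h
    · exact h
    · intro j hj hji
      have hj' : j ≤ n := by simpa [Nat.lt_succ_iff] using hj
      rw [← hc j hj', ← mul_smul, horth i j hji.symm hi hj', zero_smul]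
    · intro hni
      exact absurd (Finset.mem_range.mpr (by omega)) hni
  · intro i hi r x hx
    rw [← mul_smul, (hfc i hi r).eq, mul_smul, hx]
  · intro x
    refine ⟨fun hx => hinv 0 (Nat.zero_le _) x hx, fun hx => ?_⟩
    rw [hf0]
    exact avg_aux_smul (P 0) (hcard 0 (Nat.zero_le _)) x hx
  · intro k hk1 hk x hx hg
    obtain ⟨k, rfl⟩ : ∃ m, k = m + 1 := ⟨k - 1, by omega⟩
    have h := avg_aux_smul (P k) (hcard k (by omega)) x hg
    rw [← hx, hfs, mul_smul, sub_smul, one_smul, h, sub_self, smul_zero]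
  · intro k hk1 hk j hkj hj x hx g hg
    exact hinv k hk x hx g (hchain k j hkj hj hg)
end

section
/- Let p be a prime number, R a commutative ring in which p is invertible, H a finite group, P a p-subgroup of H, and {1} = Pₙ ⊆ Pₙ₋₁ ⊆ ⋯ ⊆ P₁ ⊆ P₀ = P a chain of subgroups, each normal in H; for an R[H]-module M let M = M₋₁ ⊕ M₀ ⊕ ⋯ ⊕ M_{n−1} be its break decomposition (M₋₁ := e₀·M, M_i := e_{i+1}(1 − e_i)·M where e_i := |P_i|⁻¹ Σ_{g ∈ P_i} g). Then for R[H]-modules M, N: (a) every R[H]-linear map φ : M → N satisfies φ(M_i) ⊆ N_i for all i ∈ {−1, 0, …, n−1}; consequently Hom_{R[H]}(M_i, N_j) = 0 whenever i ≠ j; (b) equipping M ⊗_R N with the diagonal H-action g·(m ⊗ n) = g·m ⊗ g·n, for i ≠ j the image of M_i ⊗_R N_j in M ⊗_R N is contained in (M ⊗_R N)_{max(i,j)}, and the image of M_i ⊗_R N_i is contained in the sum Σ_{j ≤ i} (M ⊗_R N)_j (indices ordered with −1 < 0 < 1 < ⋯ < n−1). -/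
open scoped TensorProduct

lemma avg_sum (R : Type*) {H : Type*} [CommRing R] [Group H] (Q : Subgroup H) [Fintype Q] :
    avgIdem R Q = Ring.inverse (Nat.card Q : R) • ∑ g : Q, MonoidAlgebra.of R H (g : H) := by
  rw [avgIdem, finsum_eq_sum_of_fintype]

lemma of_mul_avg (R : Type*) {H : Type*} [CommRing R] [Group H] [Finite H] (Q : Subgroup H)
    (g : H) (hg : g ∈ Q) : MonoidAlgebra.of R H g * avgIdem R Q = avgIdem R Q := by
  have := Fintype.ofFinite Q
  rw [avg_sum, mul_smul_comm, Finset.mul_sum]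
  congr 1
  refine Fintype.sum_equiv (Equiv.mulLeft (⟨g, hg⟩ : Q)) _ _ (fun x => ?_)
  rw [← map_mul]; rfl

lemma avg_mul_of (R : Type*) {H : Type*} [CommRing R] [Group H] [Finite H] (Q : Subgroup H)
    (g : H) (hg : g ∈ Q) : avgIdem R Q * MonoidAlgebra.of R H g = avgIdem R Q := by
  have := Fintype.ofFinite Q
  rw [avg_sum, smul_mul_assoc, Finset.sum_mul]
  congr 1
  refine Fintype.sum_equiv (Equiv.mulRight (⟨g, hg⟩ : Q)) _ _ (fun x => ?_)
  rw [← map_mul]; rfl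

lemma avg_mul_avg_left {R : Type*} {H : Type*} [CommRing R] [Group H] [Finite H]
    {Q K : Subgroup H} (hK : IsUnit (Nat.card K : R)) (h : K ≤ Q) :
    avgIdem R K * avgIdem R Q = avgIdem R Q := by
  have := Fintype.ofFinite K
  rw [avg_sum R K, smul_mul_assoc, Finset.sum_mul,
    Finset.sum_congr rfl (fun (g : K) _ => of_mul_avg R Q g (h g.2)), Finset.sum_const,
    Finset.card_univ, ← Nat.card_eq_fintype_card, ← Nat.cast_smul_eq_nsmul R, smul_smul,
    Ring.inverse_mul_cancel _ hK, one_smul]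

lemma avg_mul_avg_right {R : Type*} {H : Type*} [CommRing R] [Group H] [Finite H]
    {Q K : Subgroup H} (hK : IsUnit (Nat.card K : R)) (h : K ≤ Q) :
    avgIdem R Q * avgIdem R K = avgIdem R Q := by
  have := Fintype.ofFinite K
  rw [avg_sum R K, mul_smul_comm, Finset.mul_sum,
    Finset.sum_congr rfl (fun (g : K) _ => avg_mul_of R Q g (h g.2)), Finset.sum_const,
    Finset.card_univ, ← Nat.card_eq_fintype_card, ← Nat.cast_smul_eq_nsmul R, smul_smul,
    Ring.inverse_mul_cancel _ hK, one_smul]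

section
variable {R H : Type*} [CommRing R] [Group H] [Finite H]
  {M N : Type*} [AddCommGroup M] [Module R M] [AddCommGroup N] [Module R N]
  (ρ : Representation R H M) (τ : Representation R H N)

lemma avg_apply (Q : Subgroup H) [Fintype Q] (x : M) :
    ρ.asAlgebraHom (avgIdem R Q) x
      = Ring.inverse (Nat.card Q : R) • ∑ g : Q, ρ (g : H) x := by
  rw [avg_sum]
  simp [LinearMap.sum_apply, Representation.asAlgebraHom_single_one]

lemma avg_fix {Q : Subgroup H} {x : M} (h : ρ.asAlgebraHom (avgIdem R Q) x = x)
    (g : H) (hg : g ∈ Q) : ρ g x = x := by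
  rw [← h, ← Representation.asAlgebraHom_of ρ g, ← Module.End.mul_apply, ← map_mul,
    of_mul_avg R Q g hg]

lemma fix_avg {Q : Subgroup H} (hQ : IsUnit (Nat.card Q : R)) {x : M}
    (h : ∀ g ∈ Q, ρ g x = x) : ρ.asAlgebraHom (avgIdem R Q) x = x := by
  have := Fintype.ofFinite Q
  rw [avg_apply, Finset.sum_congr rfl (fun (g : Q) _ => h g g.2), Finset.sum_const,
    Finset.card_univ, ← Nat.card_eq_fintype_card, ← Nat.cast_smul_eq_nsmul R, smul_smul,
    Ring.inverse_mul_cancel _ hQ, one_smul]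

lemma equiv_alg (φ : M →ₗ[R] N) (h : ∀ (g : H) (x : M), φ (ρ g x) = τ g (φ x))
    (a : MonoidAlgebra R H) (x : M) : φ (ρ.asAlgebraHom a x) = τ.asAlgebraHom a (φ x) := by
  induction a using MonoidAlgebra.induction_on with
  | of g => simpa [Representation.asAlgebraHom_single_one] using h g x
  | add a b ha hb => simp [ha, hb]
  | smul r a ha => simp [ha]

lemma avg_tmul_right {Q : Subgroup H} {x : M} (h : ∀ g ∈ Q, ρ g x = x) (y : N) :
    (ρ.tprod τ).asAlgebraHom (avgIdem R Q) (x ⊗ₜ[R] y)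
      = x ⊗ₜ[R] (τ.asAlgebraHom (avgIdem R Q) y) := by
  have := Fintype.ofFinite Q
  rw [avg_apply, avg_apply, TensorProduct.tmul_smul, TensorProduct.tmul_sum]
  congr 1
  refine Finset.sum_congr rfl (fun g _ => ?_)
  rw [Representation.tprod_apply, TensorProduct.map_tmul, h g g.2]

lemma avg_tmul_left {Q : Subgroup H} {y : N} (h : ∀ g ∈ Q, τ g y = y) (x : M) :
    (ρ.tprod τ).asAlgebraHom (avgIdem R Q) (x ⊗ₜ[R] y)
      = (ρ.asAlgebraHom (avgIdem R Q) x) ⊗ₜ[R] y := by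
  have := Fintype.ofFinite Q
  rw [avg_apply, avg_apply, ← TensorProduct.smul_tmul', TensorProduct.sum_tmul]
  congr 1
  refine Finset.sum_congr rfl (fun g _ => ?_)
  rw [Representation.tprod_apply, TensorProduct.map_tmul, h g g.2]

lemma brk_succ {P : ℕ → Subgroup H} {i : ℕ} (hi : IsUnit (Nat.card (P (i+1)) : R))
    (h : P (i+1) ≤ P i) :
    brkIdem R P (i+1) = avgIdem R (P (i+1)) - avgIdem R (P i) := by
  simp [brkIdem, mul_sub, avg_mul_avg_left hi h]

lemma brk_iff {n : ℕ} {P : ℕ → Subgroup H} (hu : ∀ i ≤ n, IsUnit (Nat.card (P i) : R))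
    (hchain : ∀ i j : ℕ, i ≤ j → j ≤ n → P j ≤ P i) {i : ℕ} (hi : i ≤ n) (x : M) :
    ρ.asAlgebraHom (brkIdem R P i) x = x ↔
      ((∀ g ∈ P i, ρ g x = x) ∧
        ∀ k, k + 1 = i → ρ.asAlgebraHom (avgIdem R (P k)) x = 0) := by
  rcases i with _ | i
  · simp only [brkIdem, if_true]
    exact ⟨fun h => ⟨avg_fix ρ h, by simp⟩, fun h => fix_avg ρ (hu 0 hi) h.1⟩
  · have hle := hchain i (i+1) (by omega) hi
    have h1 := hu (i+1) hi
    have h0 := hu i (by omega)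
    rw [brk_succ h1 hle]
    constructor
    · intro h
      have e1 : avgIdem R (P (i+1)) * (avgIdem R (P (i+1)) - avgIdem R (P i))
          = avgIdem R (P (i+1)) - avgIdem R (P i) := by
        rw [mul_sub, avg_mul_avg_left h1 le_rfl, avg_mul_avg_left h1 hle]
      have e2 : avgIdem R (P i) * (avgIdem R (P (i+1)) - avgIdem R (P i)) = 0 := by
        rw [mul_sub, avg_mul_avg_right h1 hle, avg_mul_avg_left h0 le_rfl, sub_self]
      refine ⟨avg_fix ρ ?_, ?_⟩
      · conv_lhs => rw [← h]
        rw [← Module.End.mul_apply, ← map_mul, e1, h]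
      · intro k hk
        obtain rfl : k = i := by omega
        rw [← h, ← Module.End.mul_apply, ← map_mul, e2, map_zero, LinearMap.zero_apply]
    · rintro ⟨ha, hb⟩
      rw [map_sub, LinearMap.sub_apply, fix_avg ρ h1 ha, hb i rfl, sub_zero]

lemma brk_sum {n : ℕ} {P : ℕ → Subgroup H} (hu : ∀ i ≤ n, IsUnit (Nat.card (P i) : R))
    (hchain : ∀ i j : ℕ, i ≤ j → j ≤ n → P j ≤ P i) (i : ℕ) (hi : i ≤ n) :
    ∑ j ∈ Finset.range (i + 1), brkIdem R P j = avgIdem R (P i) := by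
  induction i with
  | zero => simp [brkIdem]
  | succ i ih =>
    rw [Finset.sum_range_succ, ih (by omega),
      brk_succ (hu _ hi) (hchain i (i+1) (by omega) hi), add_sub_cancel]

end

/-- The compatibilities (eq_estimate-break) of §3.1 of Chapter 4 (subsec_breaks), for
representations `ρ`, `τ` of `H` on `M`, `N` (equivalently, `R[H]`-modules), with break
components `M_{k-1} = {x | ρ(f_k) x = x}` (shifted indexing, `0 ≤ k ≤ n`):
(a) every `R[H]`-linear map `φ : M → N` maps each component of `M` into the corresponding
component of `N`; consequently any `R[H]`-linear map sending the `i`-th component into the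
`j`-th component with `i ≠ j` vanishes on it;
(b) for the diagonal action on `M ⊗_R N`: if `i ≠ j` then `M_i ⊗ N_j` lands in the
component `max i j`, while `M_i ⊗ N_i` lands in the sum of the components `j ≤ i`. -/
theorem break_decomposition_hom_tensor {R H : Type*} [CommRing R] [Group H] [Finite H]
    (p : ℕ) (hp : p.Prime) (hpR : IsUnit (p : R))
    (n : ℕ) (P : ℕ → Subgroup H)
    (hPp : IsPGroup p (P 0))
    (hchain : ∀ i j : ℕ, i ≤ j → j ≤ n → P j ≤ P i)
    (hbot : P n = ⊥)
    (hnorm : ∀ i ≤ n, (P i).Normal)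
    {M N : Type*} [AddCommGroup M] [Module R M] [AddCommGroup N] [Module R N]
    (ρ : Representation R H M) (τ : Representation R H N) :
    -- (a) equivariant maps respect the break decomposition …
    (∀ φ : M →ₗ[R] N, (∀ (g : H) (x : M), φ (ρ g x) = τ g (φ x)) →
      (∀ i ≤ n, ∀ x : M, ρ.asAlgebraHom (brkIdem R P i) x = x →
        τ.asAlgebraHom (brkIdem R P i) (φ x) = φ x) ∧
      (∀ i j : ℕ, i ≤ n → j ≤ n → i ≠ j → ∀ x : M,
        ρ.asAlgebraHom (brkIdem R P i) x = x →
        τ.asAlgebraHom (brkIdem R P j) (φ x) = φ x → φ x = 0)) ∧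
    -- (b) behaviour under tensor products (diagonal action) : distinct breaks …
    (∀ i j : ℕ, i ≤ n → j ≤ n → i ≠ j → ∀ (x : M) (y : N),
      ρ.asAlgebraHom (brkIdem R P i) x = x →
      τ.asAlgebraHom (brkIdem R P j) y = y →
      (ρ.tprod τ).asAlgebraHom (brkIdem R P (max i j)) (x ⊗ₜ[R] y) = x ⊗ₜ[R] y) ∧
    -- … and equal breaks
    (∀ i ≤ n, ∀ (x : M) (y : N),
      ρ.asAlgebraHom (brkIdem R P i) x = x →
      τ.asAlgebraHom (brkIdem R P i) y = y →
      ∑ j ∈ Finset.range (i + 1),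
        (ρ.tprod τ).asAlgebraHom (brkIdem R P j) (x ⊗ₜ[R] y) = x ⊗ₜ[R] y) := by
  have hu : ∀ i ≤ n, IsUnit (Nat.card (P i) : R) := by
    intro i hi
    haveI : Fact p.Prime := ⟨hp⟩
    obtain ⟨k, hk⟩ := IsPGroup.iff_card.mp (hPp.to_le (hchain 0 i (Nat.zero_le _) hi))
    rw [hk, Nat.cast_pow]
    exact hpR.pow k
  have tfix : ∀ (g : H) (x : M) (y : N), ρ g x = x → τ g y = y →
      (ρ.tprod τ) g (x ⊗ₜ[R] y) = x ⊗ₜ[R] y := by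
    intro g x y hx hy
    rw [Representation.tprod_apply, TensorProduct.map_tmul, hx, hy]
  refine ⟨fun φ hφ => ⟨fun i hi x hx => ?_, fun i j hi hj hij x hx hy => ?_⟩,
    fun i j hi hj hij x y hx hy => ?_, fun i hi x y hx hy => ?_⟩
  · rw [← equiv_alg ρ τ φ hφ, hx]
  · rw [brk_iff ρ hu hchain hi] at hx
    rw [brk_iff τ hu hchain hj] at hy
    rcases lt_or_gt_of_ne hij with h | h
    · obtain ⟨k, rfl⟩ : ∃ k, j = k + 1 := ⟨j - 1, by omega⟩
      rw [← hy.2 k rfl, ← equiv_alg ρ τ φ hφ, fix_avg ρ (hu k (by omega))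
        (fun g hg => hx.1 g (hchain i k (by omega) (by omega) hg))]
    · obtain ⟨k, rfl⟩ : ∃ k, i = k + 1 := ⟨i - 1, by omega⟩
      rw [← fix_avg τ (hu k (by omega))
        (fun g hg => hy.1 g (hchain j k (by omega) (by omega) hg)),
        ← equiv_alg ρ τ φ hφ, hx.2 k rfl, map_zero]
  · rw [brk_iff ρ hu hchain hi] at hx
    rw [brk_iff τ hu hchain hj] at hy
    rw [brk_iff (ρ.tprod τ) hu hchain (max_le hi hj)]
    refine ⟨fun g hg => tfix g x y
      (hx.1 g (hchain _ _ (le_max_left i j) (max_le hi hj) hg))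
      (hy.1 g (hchain _ _ (le_max_right i j) (max_le hi hj) hg)), fun k hk => ?_⟩
    rcases lt_or_gt_of_ne hij with h | h
    · rw [avg_tmul_right ρ τ (fun g hg => hx.1 g (hchain i k (by omega) (by omega) hg)),
        hy.2 k (by omega), TensorProduct.tmul_zero]
    · rw [avg_tmul_left ρ τ (fun g hg => hy.1 g (hchain j k (by omega) (by omega) hg)),
        hx.2 k (by omega), TensorProduct.zero_tmul]
  · rw [brk_iff ρ hu hchain hi] at hx
    rw [brk_iff τ hu hchain hi] at hy
    rw [← LinearMap.sum_apply, ← map_sum, brk_sum hu hchain i hi]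
    exact fix_avg _ (hu i hi) (fun g hg => tfix g x y (hx.1 g hg) (hy.1 g hg))
end

section
/- Let s : ℝ → ℝ be a function that is convex on the half-line [0, ∞), and suppose that for every nonnegative rational number q, the value s(q) is a rational number whose denominator (in lowest terms) divides the denominator of q. Then for every positive rational q the right derivative of s at q, that is the limit lim_{h → 0⁺} (s(q + h) − s(q))/h (which exists by convexity), is an integer; consequently, by the right-continuity and monotonicity of the right derivative of a convex function, the right derivative of s at every real x > 0 is an integer, and s is piecewise linear with integer slopes on (0, ∞). -/
theorem aux_mul_int (r : ℚ) (n : ℤ) (h : (r.den : ℤ) ∣ n) : ∃ N : ℤ, (r : ℝ) * n = N := by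
  obtain ⟨k, rfl⟩ := h
  refine ⟨r.num * k, ?_⟩
  have h1 : r * (r.den : ℚ) = r.num := Rat.mul_den_eq_num r
  have h2 : (r : ℝ) * (r.den : ℝ) = r.num := by exact_mod_cast h1
  push_cast
  rw [← mul_assoc, h2]

theorem aux_A (s : ℝ → ℝ)
    (hrat : ∀ q : ℚ, 0 ≤ q → ∃ r : ℚ, s (q : ℝ) = (r : ℝ) ∧ r.den ∣ q.den)
    (q : ℚ) (hq : 0 < q) (ε : ℝ) (hε : 0 < ε) :
    ∃ y : ℝ, (q : ℝ) < y ∧ y < q + ε ∧ ∃ m : ℤ, s y - s q = m * (y - q) := by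
  have hcop : IsCoprime q.num (q.den : ℤ) := by
    rw [Int.isCoprime_iff_nat_coprime]; simpa using q.reduced
  obtain ⟨v, u, huv⟩ := hcop
  have hb : (0 : ℝ) < q.den := by exact_mod_cast q.den_pos
  have hb1 : (1 : ℝ) ≤ q.den := by exact_mod_cast q.den_pos
  have hqb : (q : ℝ) * q.den = q.num := by exact_mod_cast Rat.mul_den_eq_num q
  obtain ⟨k, hk⟩ := exists_nat_gt (|(v : ℝ)| + 1 / ε)
  set n : ℤ := -v + k * q.den with hn
  set w : ℤ := u + k * q.num with hw
  have hwn : w * q.den - q.num * n = 1 := by rw [hn, hw]; linear_combination huv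
  have hwnR : (w : ℝ) * q.den - q.num * n = 1 := by exact_mod_cast hwn
  have hnR : 1 / ε < (n : ℝ) := by
    rw [hn]; push_cast
    have := le_abs_self (v : ℝ)
    have h2 : (k : ℝ) * 1 ≤ k * q.den := by gcongr
    linarith
  have hn0 : (0 : ℝ) < n := lt_trans (by positivity) hnR
  have hyq : (w : ℝ) / n - q = 1 / (q.den * n) := by
    field_simp
    linear_combination hwnR - (n : ℝ) * hqb
  have hpos : 0 < 1 / ((q.den : ℝ) * n) := by positivity
  have hcast : (((w : ℚ) / (n : ℚ) : ℚ) : ℝ) = (w : ℝ) / n := by push_cast; rfl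
  have hy0 : (0 : ℚ) ≤ (w : ℚ) / (n : ℚ) := by
    have : (0 : ℝ) ≤ (((w : ℚ) / (n : ℚ) : ℚ) : ℝ) := by
      rw [hcast]
      have : (0 : ℝ) < q := by exact_mod_cast hq
      linarith
    exact_mod_cast this
  refine ⟨(w : ℝ) / n, by linarith, ?_, ?_⟩
  · have : 1 / ((q.den : ℝ) * n) < ε := by
      rw [div_lt_iff₀ (by positivity)]
      rw [div_lt_iff₀ hε] at hnR
      nlinarith
    linarith
  · obtain ⟨r, hr, hrd⟩ := hrat _ hy0
    obtain ⟨t, ht, htd⟩ := hrat q hq.le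
    rw [hcast] at hr
    obtain ⟨N, hN⟩ := aux_mul_int r n ((Int.natCast_dvd_natCast.mpr hrd).trans (by
      rw [← Rat.divInt_eq_div]; exact Rat.den_dvd _ _))
    obtain ⟨c, hc⟩ := aux_mul_int t q.den (Int.natCast_dvd_natCast.mpr htd)
    refine ⟨N * q.den - c * n, ?_⟩
    rw [hr, ht, hyq]
    push_cast at hc ⊢
    rw [← hN, ← hc]
    field_simp

/-- three point convexity -/
theorem aux_conv {s : ℝ → ℝ} (hconv : ConvexOn ℝ (Set.Ici (0 : ℝ)) s) {a b c : ℝ}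
    (ha : 0 ≤ a) (hab : a < b) (hbc : b < c) :
    (s b - s a) * (c - b) ≤ (s c - s b) * (b - a) := by
  have h := hconv.slope_mono_adjacent (x := a) (y := b) (z := c) ha
    (show (0 : ℝ) ≤ c by linarith) hab hbc
  rwa [div_le_div_iff₀ (by linarith) (by linarith)] at h

theorem aux_B (s : ℝ → ℝ) (hconv : ConvexOn ℝ (Set.Ici (0 : ℝ)) s)
    (hrat : ∀ q : ℚ, 0 ≤ q → ∃ r : ℚ, s (q : ℝ) = (r : ℝ) ∧ r.den ∣ q.den)
    (q : ℚ) (hq : 0 < q) :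
    ∃ (m : ℤ) (z : ℝ), (q : ℝ) < z ∧ ∀ y, (q : ℝ) < y → y < z → s y - s q = m * (y - q) := by
  have hqR : (0 : ℝ) < q := by exact_mod_cast hq
  obtain ⟨m, ⟨z, hz, hmz⟩, hmin⟩ := Int.exists_least_of_bdd
    (P := fun m : ℤ => ∃ y : ℝ, (q : ℝ) < y ∧ s y - s q = m * (y - q))
    (by
      refine ⟨⌊(s q - s 0) / q⌋, ?_⟩
      rintro m ⟨y, hy, hm⟩
      have h := aux_conv hconv le_rfl hqR hy
      have : ((⌊(s q - s 0) / q⌋ : ℤ) : ℝ) ≤ m := by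
        refine (Int.floor_le _).trans ?_
        rw [div_le_iff₀ hqR]
        rw [hm] at h
        have : 0 < y - q := by linarith
        nlinarith
      exact_mod_cast this)
    (by
      obtain ⟨y, hy, -, m, hm⟩ := aux_A s hrat q hq 1 one_pos
      exact ⟨m, y, hy, hm⟩)
  refine ⟨m, z, hz, fun y hqy hyz => ?_⟩
  obtain ⟨p, hp, hpy, k, hk⟩ := aux_A s hrat q hq (y - q) (by linarith)
  have hmk : (m : ℝ) ≤ k := by exact_mod_cast hmin k ⟨p, hp, hk⟩
  have h1 := aux_conv hconv hqR.le hqy hyz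
  have h2 := aux_conv hconv hqR.le hp (show p < y by linarith)
  apply le_antisymm
  · have : 0 < z - q := by linarith
    nlinarith
  · have h3 : (k : ℝ) * (y - p) ≤ s y - s p := by
      rw [hk] at h2
      have : 0 < p - q := by linarith
      nlinarith
    nlinarith

theorem aux_C (s : ℝ → ℝ) (hconv : ConvexOn ℝ (Set.Ici (0 : ℝ)) s)
    (hrat : ∀ q : ℚ, 0 ≤ q → ∃ r : ℚ, s (q : ℝ) = (r : ℝ) ∧ r.den ∣ q.den)
    (x : ℝ) (hx : 0 < x) : ∃ (m : ℤ) (c : ℝ) (ε : ℝ), 0 < ε ∧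
      ∀ y ∈ Set.Ico x (x + ε), s y = (m : ℝ) * y + c := by
  have hB : ∀ q : ℚ, x < q → ∃ (m : ℤ) (z : ℝ), (q : ℝ) < z ∧
      ∀ y, (q : ℝ) < y → y < z → s y - s q = m * (y - q) := fun q hq =>
    aux_B s hconv hrat q (by exact_mod_cast hx.trans hq)
  obtain ⟨m, ⟨p, hp, z, hz, hpz⟩, hmin⟩ := Int.exists_least_of_bdd
    (P := fun m : ℤ => ∃ q : ℚ, x < q ∧ ∃ z : ℝ, (q : ℝ) < z ∧
      ∀ y, (q : ℝ) < y → y < z → s y - s q = m * (y - q))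
    (by
      refine ⟨⌊(s x - s 0) / x⌋, ?_⟩
      rintro m ⟨q, hq, z, hz, hm⟩
      obtain ⟨y, hy, hyz⟩ := exists_between hz
      have h := aux_conv hconv le_rfl hx hq
      have h' := aux_conv hconv hx.le hq hy
      have : ((⌊(s x - s 0) / x⌋ : ℤ) : ℝ) ≤ m := by
        refine (Int.floor_le _).trans ?_
        rw [div_le_iff₀ hx]
        rw [hm y hy hyz] at h'
        have h3 : 0 < y - q := by linarith
        have h4 : 0 < q - x := by linarith
        have h5 : s q - s x ≤ m * (q - x) := by nlinarith
        nlinarith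
      exact_mod_cast this)
    (by
      obtain ⟨q, hq, -⟩ := exists_rat_btwn (show x < x + 1 by linarith)
      obtain ⟨m, h⟩ := hB q hq
      exact ⟨m, q, hq, h⟩)
  have key : ∀ (q : ℚ) (y : ℝ), x < q → (q : ℝ) < y → y < p → s y - s q = m * (y - q) := by
    intro q y hxq hqy hyp
    obtain ⟨k, z', hz', hk⟩ := hB q hxq
    have hmk : (m : ℝ) ≤ k := by exact_mod_cast hmin k ⟨q, hxq, z', hz', hk⟩
    obtain ⟨t, ht, htp⟩ := exists_between hz
    obtain ⟨a, ha, haz⟩ := exists_between (lt_min hz' hqy)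
    have haz' := lt_of_lt_of_le haz (min_le_left _ _)
    have hay := lt_of_lt_of_le haz (min_le_right _ _)
    have e1 := hk a ha haz'
    have e2 := hpz t ht htp
    have hq0 : (0 : ℝ) ≤ q := by linarith
    have c1 := aux_conv hconv hq0 ha hay
    have c2 := aux_conv hconv hq0 hqy hyp
    have c3 := aux_conv hconv (show 0 ≤ y by linarith) hyp ht
    apply le_antisymm
    · rw [e2] at c3
      have : s p - s y ≤ m * (p - y) := by
        have : 0 < t - p := by linarith
        nlinarith
      have : 0 < p - y := by linarith
      have : 0 < y - q := by linarith
      nlinarith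
    · rw [e1] at c1
      have : (k : ℝ) * (y - a) ≤ s y - s a := by
        have : 0 < a - q := by linarith
        nlinarith
      nlinarith
  obtain ⟨w, hxw, hwp⟩ := exists_between hp
  have key2 : ∀ y, x < y → y < p → s y = m * y + (s w - m * w) := by
    intro y hy hyp
    obtain ⟨q, hq, hqm⟩ := exists_rat_btwn (lt_min hy hxw)
    have := key q y hq (lt_of_lt_of_le hqm (min_le_left _ _)) hyp
    have := key q w hq (lt_of_lt_of_le hqm (min_le_right _ _)) hwp
    linarith
  refine ⟨m, s w - m * w, p - x, by linarith, ?_⟩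
  rintro y ⟨hxy, hyp⟩
  rcases hxy.eq_or_lt with rfl | hxy
  · have hc : ContinuousAt s x := by
      have := hconv.continuousOn_interior
      rw [interior_Ici] at this
      exact this.continuousAt (Ioi_mem_nhds hx)
    have t1 : Filter.Tendsto s (nhdsWithin x (Set.Ioi x)) (nhds (s x)) :=
      hc.tendsto.mono_left nhdsWithin_le_nhds
    have t2 : Filter.Tendsto (fun y => (m : ℝ) * y + (s w - m * w)) (nhdsWithin x (Set.Ioi x))
        (nhds (m * x + (s w - m * w))) :=
      (Continuous.tendsto (by fun_prop) x).mono_left nhdsWithin_le_nhds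
    refine tendsto_nhds_unique t1 (t2.congr' ?_)
    filter_upwards [Ioo_mem_nhdsGT hp] with y hy
    exact (key2 y hy.1 hy.2).symm
  · exact key2 y hxy (by linarith)

theorem aux_D (s : ℝ → ℝ) (x : ℝ) (m : ℤ) (c ε : ℝ) (hε : 0 < ε)
    (h : ∀ y ∈ Set.Ico x (x + ε), s y = (m : ℝ) * y + c) :
    Filter.Tendsto (fun h : ℝ => (s (x + h) - s x) / h)
        (nhdsWithin 0 (Set.Ioi 0)) (nhds (m : ℝ)) := by
  refine tendsto_const_nhds.congr' ?_
  filter_upwards [Ioo_mem_nhdsGT hε] with t ht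
  have h0 := ht.1
  rw [h x ⟨le_rfl, by linarith⟩, h (x + t) ⟨by linarith, by linarith [ht.2]⟩]
  field_simp
  ring


/-- Claim cl_integral-slope in the proof of Theorem 4.10 (th_Newton(iii)): let
`s : ℝ → ℝ` be convex on `[0, ∞)` and suppose that for every rational `q ≥ 0`, `s q` is
a rational number whose denominator divides the denominator of `q`.  Then the right
derivative of `s` (which exists by convexity) is an integer at every positive rational,
hence — by right-continuity and monotonicity of the right derivative of a convex
function — at every positive real, and `s` is piecewise linear with integer slopes on
`(0, ∞)`. -/
theorem convex_rational_denominator_slopes (s : ℝ → ℝ)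
    (hconv : ConvexOn ℝ (Set.Ici (0 : ℝ)) s)
    (hrat : ∀ q : ℚ, 0 ≤ q → ∃ r : ℚ, s (q : ℝ) = (r : ℝ) ∧ r.den ∣ q.den) :
    (∀ q : ℚ, 0 < q → ∃ m : ℤ,
      Filter.Tendsto (fun h : ℝ => (s ((q : ℝ) + h) - s (q : ℝ)) / h)
        (nhdsWithin 0 (Set.Ioi 0)) (nhds (m : ℝ))) ∧
    (∀ x : ℝ, 0 < x → ∃ m : ℤ,
      Filter.Tendsto (fun h : ℝ => (s (x + h) - s x) / h)
        (nhdsWithin 0 (Set.Ioi 0)) (nhds (m : ℝ))) ∧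
    (∀ x : ℝ, 0 < x → ∃ (m : ℤ) (c : ℝ) (ε : ℝ), 0 < ε ∧
      ∀ y ∈ Set.Ico x (x + ε), s y = (m : ℝ) * y + c) := by
  have hC := aux_C s hconv hrat
  have hD : ∀ x : ℝ, 0 < x → ∃ m : ℤ,
      Filter.Tendsto (fun h : ℝ => (s (x + h) - s x) / h)
        (nhdsWithin 0 (Set.Ioi 0)) (nhds (m : ℝ)) := by
    intro x hx
    obtain ⟨m, c, ε, hε, h⟩ := hC x hx
    exact ⟨m, aux_D s x m c ε hε h⟩
  exact ⟨fun q hq => hD q (by exact_mod_cast hq), hD, hC⟩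
end
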